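/- Let φ : ℝ → [0,∞) be continuous, C² on (0,∞), with φ = 0 on (−∞,0], φ > 0 on (0,∞), and suppose φ(η) ≥ C η^k for η ∈ (0,η₀) for some constants C > 0, η₀ > 0, 0 < k < 3/2. Define g(y) = 4π e^{4y} ∫₀^{1−e^{−y}} φ(η)(1−η)²((1−η)² − e^{−2y})^{1/2} dη and h(y) = (4π/3) e^{4y} ∫₀^{1−e^{−y}} φ(η)((1−η)² − e^{−2y})^{3/2} dη for y > 0, and g(y) = h(y) = 0 for y ≤ 0. Then for every κ > 0 there exists a unique y = y_κ ∈ C²([0,∞)) with y(0) = κ solving y'(r) = −(1 − 2m(r)/r)^{−1} (m(r)/r² + 4π r h(y(r))) for r > 0, where m(r) = 4π ∫₀^r g(y(s)) s² ds; the solution satisfies 2m(r) < r for all r > 0, y is strictly decreasing, and there exists a unique R_κ ∈ (0,∞) with y(R_κ) = 0, so that ρ_κ := g ∘ y_κ and σ_κ := h ∘ y_κ are C¹ and supported in the compact interval [0,R_κ], and the total (ADM) mass m(∞) is finite. (This yields a one-parameter family of compactly supported steady states of the spherically symmetric, asymptotically flat Einstein–Vlasov system, parameterized by the central redshift κ = μ_κ(R_κ)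 − μ_κ(0).) -/

import Mathlib

/-!
The proof treats the structure equation as a Volterra integral equation and follows four ideas.

**The profiles.** The substitution `p = (1 - η)² = x + τ`, `x = e^{-2y}`, turns `gEV φ` and `hEV φ`
into exponential factors times Abel-type integrals `∫₀¹ Θ(x + τ) τ^s dτ` with `Θ` continuous. An
integration by parts shows that these are differentiable in `x` for the positive exponents `s` that
occur (`abelI_hasDerivAt`). Hence `gEV φ` and `hEV φ` are `C¹` on the whole line, nondecreasing, and
satisfy `h' = g + h` (`hEV_hasDerivAt`). The growth hypothesis on `φ` gives `g(y) ≥ c yⁿ` for small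
`y > 0`, with `n = k + 3/2` (`gEV_lower`).

**Existence and uniqueness.** After truncating `1 - 2m/r` from below at `1/25` and the argument of
`g`, `h` to `[0, κ]`, the equation has a unique global solution by a contraction argument in a
weighted sup norm (`volterra`). A solution is nonincreasing, so `m/r³` is nonincreasing, and the
identity `h' = g + h` yields a Buchdahl-type inequality `1 - 2m/r > 1/25` (`buchdahl`). Hence the
truncation is never active (`exists_unique_extSol`).

**Compact support.** If the solution stayed positive, it would tend to zero, and the mass accumulated
up to some radius `r₀` would force `y ≥ M/r` from there on. On the other hand the bound
`g(y) ≥ c yⁿ` gives `y' ≤ -c' r yⁿ`, hence `y^{1-n} ≥ c'' (r² - r₀²)`. As `n < 3`, the two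
bounds contradict each other for large `r` (`ExtSol.exists_nonpos`).

**Regularity.** The identity `m/r² = r · 4π ∫₀¹ g(y(ru)) u² du` shows that `m/r²` is `C¹` up to the
centre, so the right-hand side of the equation is `C¹` on `[0,∞)` and `y` is `C²`
(`ExtSol.contDiffOn`).
-/

open MeasureTheory Set Filter Topology
open scoped ENNReal

noncomputable section

/-- The profile `g(y) = 4π e^{4y} ∫₀^{1−e^{−y}} φ(η)(1−η)²((1−η)²−e^{−2y})^{1/2} dη`
for `y > 0`, and `g(y) = 0` for `y ≤ 0`; it gives the mass-energy density `ρ = g(y)`. -/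
def gEV (φ : ℝ → ℝ) (y : ℝ) : ℝ :=
  if 0 < y then 4 * Real.pi * Real.exp (4 * y) *
    ∫ η in (0 : ℝ)..(1 - Real.exp (-y)),
      φ η * (1 - η) ^ 2 * Real.sqrt ((1 - η) ^ 2 - Real.exp (-2 * y))
  else 0

/-- The profile `h(y) = (4π/3) e^{4y} ∫₀^{1−e^{−y}} φ(η)((1−η)²−e^{−2y})^{3/2} dη`
for `y > 0`, and `h(y) = 0` for `y ≤ 0`; it gives the pressure `σ = h(y)`. -/
def hEV (φ : ℝ → ℝ) (y : ℝ) : ℝ :=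
  if 0 < y then 4 * Real.pi / 3 * Real.exp (4 * y) *
    ∫ η in (0 : ℝ)..(1 - Real.exp (-y)),
      φ η * ((1 - η) ^ 2 - Real.exp (-2 * y)) ^ ((3 : ℝ) / 2)
  else 0

/-- The mass function `m(r) = 4π ∫₀^r g(y(s)) s² ds`. -/
def mEV (φ : ℝ → ℝ) (y : ℝ → ℝ) (r : ℝ) : ℝ :=
  4 * Real.pi * ∫ s in (0 : ℝ)..r, gEV φ (y s) * s ^ 2

/-- `y` is a `C²` solution on `[0,∞)` of the stationary Einstein–Vlasov equation
`y' = −(1−2m/r)⁻¹ (m/r² + 4πrσ)` with `y(0) = κ`, satisfying `2m(r) < r`. -/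
def IsEVSteady (φ : ℝ → ℝ) (κ : ℝ) (y : ℝ → ℝ) : Prop :=
  ContDiffOn ℝ 2 y (Ici 0) ∧ y 0 = κ ∧
  ∀ r : ℝ, 0 < r → 2 * mEV φ y r < r ∧
    deriv y r = -(1 - 2 * mEV φ y r / r)⁻¹ *
      (mEV φ y r / r ^ 2 + 4 * Real.pi * r * hEV φ (y r))

/-! ### Abel-type integrals -/

/-- The Abel-type integral `∫₀¹ Θ(x+τ) τ^s dτ`. For `Θ` vanishing on `[1,∞)` and `x ≥ 0` this is
`∫_x^∞ Θ(p) (p-x)^s dp`, a Riemann–Liouville fractional integral of order `s + 1`. -/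
def abelI (Θ : ℝ → ℝ) (s x : ℝ) : ℝ := ∫ τ in (0 : ℝ)..1, Θ (x + τ) * τ ^ s

lemma shift_contOn {Θ : ℝ → ℝ} (hΘ : ContinuousOn Θ (Ioi 0)) {x : ℝ} (hx : 0 < x) :
    ContinuousOn (fun τ => Θ (x + τ)) (Icc 0 1) :=
  hΘ.comp (by fun_prop) (fun τ hτ => by have := hτ.1; simp only [mem_Ioi]; linarith)

lemma abel_meas {Θ : ℝ → ℝ} (hΘ : ContinuousOn Θ (Ioi 0)) (s : ℝ) {x : ℝ} (hx : 0 < x) :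
    AEStronglyMeasurable (fun τ => Θ (x + τ) * τ ^ s) (volume.restrict (uIoc 0 1)) := by
  refine ContinuousOn.aestronglyMeasurable ?_ measurableSet_uIoc
  rw [uIoc_of_le zero_le_one]
  refine ((shift_contOn hΘ hx).mono Ioc_subset_Icc_self).mul ?_
  exact continuousOn_id.rpow_const (fun τ hτ => Or.inl hτ.1.ne')

lemma abel_intervalIntegrable {Θ : ℝ → ℝ} (hΘ : ContinuousOn Θ (Ioi 0)) {s : ℝ} (hs : -1 < s)
    {x : ℝ} (hx : 0 < x) :
    IntervalIntegrable (fun τ => Θ (x + τ) * τ ^ s) volume 0 1 := by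
  refine IntervalIntegrable.continuousOn_mul (intervalIntegral.intervalIntegrable_rpow' hs) ?_
  rw [uIcc_of_le zero_le_one]
  exact shift_contOn hΘ hx

/-- Uniform domination of the integrand of `abelI Θ s` near a point `x > 0`. -/
lemma abel_bound {Θ : ℝ → ℝ} (hΘ : ContinuousOn Θ (Ioi 0)) (s : ℝ) {x : ℝ} (hx : 0 < x) :
    ∃ M : ℝ, ∀ z ∈ Ioo (x / 2) (2 * x), ∀ τ ∈ uIoc (0 : ℝ) 1, ‖Θ (z + τ) * τ ^ s‖ ≤ M * τ ^ s := by
  obtain ⟨M, hM⟩ := (isCompact_Icc (a := x / 2) (b := 2 * x + 1)).exists_bound_of_continuousOn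
    (hΘ.mono (fun p hp => lt_of_lt_of_le (half_pos hx) hp.1))
  refine ⟨M, fun z hz τ hτ => ?_⟩
  rw [uIoc_of_le zero_le_one] at hτ
  rw [norm_mul, Real.norm_of_nonneg (Real.rpow_nonneg hτ.1.le s)]
  refine mul_le_mul_of_nonneg_right (hM _ ⟨?_, ?_⟩) (Real.rpow_nonneg hτ.1.le s)
  · linarith [hz.1, hτ.1]
  · linarith [hz.2, hτ.2]

lemma abel_nhds {x : ℝ} (hx : 0 < x) : Ioo (x / 2) (2 * x) ∈ 𝓝 x :=
  Ioo_mem_nhds (by linarith) (by linarith)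

lemma abelI_continuousAt {Θ : ℝ → ℝ} (hΘ : ContinuousOn Θ (Ioi 0)) {s : ℝ} (hs : -1 < s)
    {x : ℝ} (hx : 0 < x) : ContinuousAt (abelI Θ s) x := by
  obtain ⟨M, hM⟩ := abel_bound hΘ s hx
  refine intervalIntegral.continuousAt_of_dominated_interval (bound := fun τ => M * τ ^ s)
    ?_ ?_ ?_ ?_
  · filter_upwards [abel_nhds hx] with z hz
    exact abel_meas hΘ s (by linarith [hz.1])
  · filter_upwards [abel_nhds hx] with z hz
    exact ae_of_all _ (hM z hz)
  · exact (intervalIntegral.intervalIntegrable_rpow' hs).const_mul M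
  · refine ae_of_all _ (fun τ hτ => ?_)
    rw [uIoc_of_le zero_le_one] at hτ
    have h1 : ContinuousAt Θ (x + τ) := hΘ.continuousAt (Ioi_mem_nhds (by linarith [hτ.1]))
    have h2 : ContinuousAt (fun z => Θ (z + τ)) x :=
      ContinuousAt.comp (f := fun z : ℝ => z + τ) h1 (by fun_prop)
    exact h2.mul continuousAt_const

/-- If `Ψ` is `C¹` on `(0,∞)`, then `abelI Ψ s` may be differentiated under the integral sign. -/
lemma abelI_hasDerivAt_of_deriv {Θ Ψ : ℝ → ℝ} (hΘ : ContinuousOn Θ (Ioi 0))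
    (hΨ : ∀ p, 0 < p → HasDerivAt Ψ (Θ p) p) {s : ℝ} (hs : -1 < s)
    {x : ℝ} (hx : 0 < x) : HasDerivAt (abelI Ψ s) (abelI Θ s x) x := by
  have hΨc : ContinuousOn Ψ (Ioi 0) := fun p hp => (hΨ p hp).continuousAt.continuousWithinAt
  obtain ⟨M, hM⟩ := abel_bound hΘ s hx
  refine (intervalIntegral.hasDerivAt_integral_of_dominated_loc_of_deriv_le
    (F := fun z τ => Ψ (z + τ) * τ ^ s) (F' := fun z τ => Θ (z + τ) * τ ^ s)
    (bound := fun τ => M * τ ^ s) (abel_nhds hx) ?_ (abel_intervalIntegrable hΨc hs hx)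
    (abel_meas hΘ s hx) ?_ ?_ ?_).2
  · filter_upwards [abel_nhds hx] with z hz
    exact abel_meas hΨc s (by linarith [hz.1])
  · exact ae_of_all _ (fun τ hτ z hz => hM z hz τ hτ)
  · exact (intervalIntegral.intervalIntegrable_rpow' hs).const_mul M
  · refine ae_of_all _ (fun τ hτ z hz => ?_)
    rw [uIoc_of_le zero_le_one] at hτ
    have h1 := hΨ (z + τ) (by linarith [hτ.1, hz.1])
    exact (h1.comp_add_const z τ).mul_const _

/-- Integration by parts moves one power of `τ` onto a primitive of `Θ`, which is `C¹` although `Θ`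
is merely continuous; then `abelI_hasDerivAt_of_deriv` applies. -/
lemma abelI_hasDerivAt {Θ : ℝ → ℝ} (hΘ : ContinuousOn Θ (Ioi 0)) (hΘ1 : ∀ p, 1 ≤ p → Θ p = 0)
    {s : ℝ} (hs : 0 < s) {x : ℝ} (hx : 0 < x) :
    HasDerivAt (abelI Θ s) (-s * abelI Θ (s - 1) x) x := by
  set Ψ : ℝ → ℝ := fun p => ∫ q in (1 : ℝ)..p, Θ q with hΨdef
  have hΨ : ∀ p, 0 < p → HasDerivAt Ψ (Θ p) p := by
    intro p hp
    refine intervalIntegral.integral_hasDerivAt_right ?_ ?_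
      (hΘ.continuousAt (Ioi_mem_nhds hp))
    · refine (hΘ.mono ?_).intervalIntegrable
      intro q hq
      exact lt_of_lt_of_le (lt_min one_pos hp) hq.1
    · exact hΘ.stronglyMeasurableAtFilter isOpen_Ioi p hp
  have hΨc : ContinuousOn Ψ (Ioi 0) := fun p hp => (hΨ p hp).continuousAt.continuousWithinAt
  have hΨ1 : ∀ p, 1 ≤ p → Ψ p = 0 := by
    intro p hp
    rw [hΨdef]
    refine (intervalIntegral.integral_congr (g := fun _ => (0 : ℝ)) ?_).trans (by simp)
    intro q hq
    rw [uIcc_of_le hp] at hq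
    exact hΘ1 q hq.1
  have key : ∀ z, 0 < z → abelI Θ s z = -s * abelI Ψ (s - 1) z := by
    intro z hz
    have hparts := intervalIntegral.integral_mul_deriv_eq_deriv_mul_of_hasDerivAt
      (a := 0) (b := 1) (u := fun τ : ℝ => τ ^ s) (v := fun τ => Ψ (z + τ))
      (u' := fun τ : ℝ => s * τ ^ (s - 1)) (v' := fun τ => Θ (z + τ))
      (Real.continuous_rpow_const hs.le).continuousOn
      (by rw [uIcc_of_le zero_le_one]; exact shift_contOn hΨc hz)
      (fun τ hτ => by
        rw [min_eq_left zero_le_one] at hτ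
        exact Real.hasDerivAt_rpow_const (Or.inl hτ.1.ne'))
      (fun τ hτ => by
        rw [min_eq_left zero_le_one] at hτ
        exact (hΨ (z + τ) (by linarith [hτ.1])).comp_const_add z τ)
      ((intervalIntegral.intervalIntegrable_rpow' (by linarith)).const_mul s)
      (ContinuousOn.intervalIntegrable
        (by rw [uIcc_of_le zero_le_one]; exact shift_contOn hΘ hz))
    have e1 : abelI Θ s z = ∫ τ in (0 : ℝ)..1, τ ^ s * Θ (z + τ) := by
      unfold abelI; simp_rw [mul_comm]
    rw [e1, hparts, hΨ1 (z + 1) (by linarith), Real.zero_rpow hs.ne']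
    have e2 : ∫ τ in (0 : ℝ)..1, s * τ ^ (s - 1) * Ψ (z + τ) = s * abelI Ψ (s - 1) z := by
      unfold abelI
      rw [← intervalIntegral.integral_const_mul]
      exact intervalIntegral.integral_congr (fun τ _ => by ring)
    rw [e2]
    ring
  have hd := (abelI_hasDerivAt_of_deriv hΘ hΨ (s := s - 1) (by linarith) hx).const_mul (-s)
  refine hd.congr_of_eventuallyEq ?_
  filter_upwards [Ioi_mem_nhds hx] with z hz
  exact key z hz

lemma abelI_nonneg {Θ : ℝ → ℝ} (hΘ : ∀ p, 0 ≤ Θ p) (s x : ℝ) : 0 ≤ abelI Θ s x := by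
  refine intervalIntegral.integral_nonneg zero_le_one (fun τ hτ => ?_)
  exact mul_nonneg (hΘ _) (Real.rpow_nonneg hτ.1 s)

/-! ### The density and pressure profiles -/

/-- The weight `φ(1-√p) / (2√p)` that appears after the substitution `p = (1-η)²`. -/
def thetaEV (φ : ℝ → ℝ) (p : ℝ) : ℝ := φ (1 - Real.sqrt p) / (2 * Real.sqrt p)

lemma thetaEV_contOn {φ : ℝ → ℝ} (hφ : Continuous φ) : ContinuousOn (thetaEV φ) (Ioi 0) := by
  unfold thetaEV
  refine ContinuousOn.div (by fun_prop) (by fun_prop) (fun p hp => ?_)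
  have := Real.sqrt_pos.2 hp
  positivity

lemma thetaEV_zero {φ : ℝ → ℝ} (hφ0 : ∀ η : ℝ, η ≤ 0 → φ η = 0) (p : ℝ) (hp : 1 ≤ p) :
    thetaEV φ p = 0 := by
  have : 1 ≤ Real.sqrt p := Real.one_le_sqrt.2 hp
  rw [thetaEV, hφ0 _ (by linarith), zero_div]

lemma phi_nonneg {φ : ℝ → ℝ} (hφ0 : ∀ η : ℝ, η ≤ 0 → φ η = 0)
    (hφpos : ∀ η : ℝ, 0 < η → 0 < φ η) (η : ℝ) : 0 ≤ φ η := by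
  rcases le_or_gt η 0 with h | h
  · rw [hφ0 η h]
  · exact (hφpos η h).le

lemma thetaEV_nonneg {φ : ℝ → ℝ} (hφ : ∀ η, 0 ≤ φ η) (p : ℝ) : 0 ≤ thetaEV φ p :=
  div_nonneg (hφ _) (by positivity)

/-- The substitution `η = 1 - √(x+τ)`. -/
lemma subst_integral {φ : ℝ → ℝ} (hφ : Continuous φ) (hφ0 : ∀ η : ℝ, η ≤ 0 → φ η = 0)
    {k : ℝ → ℝ} (hk : Continuous k) {x : ℝ} (hx : 0 < x) (hx1 : x < 1) :
    ∫ η in (0 : ℝ)..(1 - Real.sqrt x), φ η * k ((1 - η) ^ 2 - x)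
      = ∫ τ in (0 : ℝ)..1, thetaEV φ (x + τ) * k τ := by
  have h0 := intervalIntegral.integral_comp_mul_deriv' (a := 0) (b := 1 - x)
    (f := fun τ => 1 - Real.sqrt (x + τ)) (f' := fun τ => -(1 / (2 * Real.sqrt (x + τ))))
    (g := fun η => φ η * k ((1 - η) ^ 2 - x)) ?_ ?_ (by fun_prop)
  · simp only [Function.comp_apply, add_zero, add_sub_cancel, Real.sqrt_one, sub_self] at h0
    rw [intervalIntegral.integral_symm, ← h0, ← intervalIntegral.integral_neg]
    have hcont : ∀ a b : ℝ, 0 ≤ a → 0 ≤ b →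
        IntervalIntegrable (fun τ => thetaEV φ (x + τ) * k τ) volume a b := by
      intro a b ha hb
      refine (ContinuousOn.mul ?_ hk.continuousOn).intervalIntegrable
      refine (thetaEV_contOn hφ).comp (by fun_prop) (fun τ hτ => ?_)
      have := (le_min ha hb).trans hτ.1
      simp only [mem_Ioi]; linarith
    rw [← intervalIntegral.integral_add_adjacent_intervals
      (hcont 0 (1 - x) le_rfl (by linarith)) (hcont (1 - x) 1 (by linarith) zero_le_one)]
    have hz : ∫ τ in (1 - x)..1, thetaEV φ (x + τ) * k τ = 0 := by
      refine (intervalIntegral.integral_congr (g := fun _ => (0 : ℝ)) ?_).trans (by simp)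
      intro τ hτ
      rw [uIcc_of_le (by linarith)] at hτ
      simp only []
      rw [thetaEV_zero hφ0 _ (by linarith [hτ.1]), zero_mul]
    rw [hz, add_zero]
    refine intervalIntegral.integral_congr (fun τ hτ => ?_)
    rw [uIcc_of_le (by linarith)] at hτ
    simp only [sub_sub_cancel, thetaEV]
    rw [Real.sq_sqrt (by linarith [hτ.1]), add_sub_cancel_left]
    ring
  · intro τ hτ
    rw [uIcc_of_le (by linarith)] at hτ
    have h1 : HasDerivAt (fun τ : ℝ => x + τ) 1 τ := (hasDerivAt_id τ).const_add x
    exact (h1.sqrt (by linarith [hτ.1])).const_sub 1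
  · refine ContinuousOn.neg (ContinuousOn.div (by fun_prop) (by fun_prop) (fun τ hτ => ?_))
    rw [uIcc_of_le (by linarith)] at hτ
    have := Real.sqrt_pos.2 (show 0 < x + τ by linarith [hτ.1])
    positivity

lemma sqrt_exp_neg_two (y : ℝ) : Real.sqrt (Real.exp (-2 * y)) = Real.exp (-y) := by
  rw [show Real.exp (-2 * y) = Real.exp (-y) ^ 2 by rw [← Real.exp_nat_mul]; ring_nf]
  exact Real.sqrt_sq (Real.exp_pos _).le

lemma abelI_eq_zero {Θ : ℝ → ℝ} (hΘ1 : ∀ p, 1 ≤ p → Θ p = 0) (s : ℝ) {x : ℝ} (hx : 1 ≤ x) :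
    abelI Θ s x = 0 := by
  unfold abelI
  refine (intervalIntegral.integral_congr (g := fun _ => (0 : ℝ)) ?_).trans (by simp)
  intro τ hτ
  rw [uIcc_of_le zero_le_one] at hτ
  simp only []
  rw [hΘ1 _ (by linarith [hτ.1]), zero_mul]

lemma hEV_eq {φ : ℝ → ℝ} (hφ : Continuous φ) (hφ0 : ∀ η : ℝ, η ≤ 0 → φ η = 0) (y : ℝ) :
    hEV φ y = 4 * Real.pi / 3 * Real.exp (4 * y) *
      abelI (thetaEV φ) (3 / 2) (Real.exp (-2 * y)) := by
  unfold hEV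
  split_ifs with hy
  · have h1 : Real.exp (-2 * y) < 1 := Real.exp_lt_one_iff.2 (by linarith)
    have := subst_integral hφ hφ0 (k := fun t => t ^ ((3 : ℝ) / 2))
      (Real.continuous_rpow_const (by norm_num)) (Real.exp_pos _) h1
    rw [sqrt_exp_neg_two] at this
    rw [this, abelI]
  · rw [abelI_eq_zero (thetaEV_zero hφ0) _ (Real.one_le_exp (by linarith)), mul_zero]

lemma gEV_eq {φ : ℝ → ℝ} (hφ : Continuous φ) (hφ0 : ∀ η : ℝ, η ≤ 0 → φ η = 0) (y : ℝ) :
    gEV φ y = 4 * Real.pi * (Real.exp (4 * y) * abelI (thetaEV φ) (3 / 2) (Real.exp (-2 * y))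
      + Real.exp (2 * y) * abelI (thetaEV φ) (1 / 2) (Real.exp (-2 * y))) := by
  unfold gEV
  split_ifs with hy
  · have h1 : Real.exp (-2 * y) < 1 := Real.exp_lt_one_iff.2 (by linarith)
    have h2 := subst_integral hφ hφ0
      (k := fun t => (t + Real.exp (-2 * y)) * Real.sqrt t)
      (by fun_prop) (Real.exp_pos _) h1
    rw [sqrt_exp_neg_two] at h2
    have h3 : ∀ η, φ η * (((1 - η) ^ 2 - Real.exp (-2 * y) + Real.exp (-2 * y)) *
        Real.sqrt ((1 - η) ^ 2 - Real.exp (-2 * y))) =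
        φ η * (1 - η) ^ 2 * Real.sqrt ((1 - η) ^ 2 - Real.exp (-2 * y)) := by
      intro η; ring
    simp only [h3] at h2
    rw [h2]
    have hc := thetaEV_contOn hφ
    have h4 : ∫ τ in (0 : ℝ)..1, thetaEV φ (Real.exp (-2 * y) + τ) *
          ((τ + Real.exp (-2 * y)) * Real.sqrt τ)
        = abelI (thetaEV φ) (3 / 2) (Real.exp (-2 * y))
          + Real.exp (-2 * y) * abelI (thetaEV φ) (1 / 2) (Real.exp (-2 * y)) := by
      unfold abelI
      rw [← intervalIntegral.integral_const_mul, ← intervalIntegral.integral_add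
        (abel_intervalIntegrable hc (by norm_num) (Real.exp_pos _))
        ((abel_intervalIntegrable hc (by norm_num) (Real.exp_pos _)).const_mul _)]
      refine intervalIntegral.integral_congr (fun τ hτ => ?_)
      rw [uIcc_of_le zero_le_one] at hτ
      rw [show (3 : ℝ) / 2 = 1 + 1 / 2 by norm_num,
        Real.rpow_add_of_nonneg hτ.1 zero_le_one (by norm_num), Real.rpow_one,
        Real.sqrt_eq_rpow]
      ring
    rw [h4]
    have h5 : Real.exp (4 * y) * Real.exp (-2 * y) = Real.exp (2 * y) := by
      rw [← Real.exp_add]; ring_nf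
    rw [← h5]; ring
  · rw [abelI_eq_zero (thetaEV_zero hφ0) _ (Real.one_le_exp (by linarith)),
      abelI_eq_zero (thetaEV_zero hφ0) _ (Real.one_le_exp (by linarith))]
    ring

lemma abel_exp_hasDerivAt {φ : ℝ → ℝ} (hφ : Continuous φ) (hφ0 : ∀ η : ℝ, η ≤ 0 → φ η = 0)
    {s : ℝ} (hs : 0 < s) (y : ℝ) :
    HasDerivAt (fun y => abelI (thetaEV φ) s (Real.exp (-2 * y)))
      (2 * s * Real.exp (-2 * y) * abelI (thetaEV φ) (s - 1) (Real.exp (-2 * y))) y := by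
  have h1 : HasDerivAt (fun y : ℝ => Real.exp (-2 * y)) (Real.exp (-2 * y) * (-2)) y := by
    have : HasDerivAt (fun y : ℝ => -2 * y) (-2) y := by
      simpa using (hasDerivAt_id y).const_mul (-2 : ℝ)
    exact this.exp
  have h2 := (abelI_hasDerivAt (thetaEV_contOn hφ) (thetaEV_zero hφ0) hs
    (Real.exp_pos (-2 * y))).comp y h1
  refine h2.congr_deriv ?_
  ring

lemma exp_mul_hasDerivAt (a y : ℝ) :
    HasDerivAt (fun y : ℝ => Real.exp (a * y)) (a * Real.exp (a * y)) y := by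
  have : HasDerivAt (fun y : ℝ => a * y) a y := by
    simpa using (hasDerivAt_id y).const_mul a
  refine this.exp.congr_deriv ?_
  ring

/-- The Tolman–Oppenheimer–Volkov relation `h' = g + h`. -/
lemma hEV_hasDerivAt {φ : ℝ → ℝ} (hφ : Continuous φ) (hφ0 : ∀ η : ℝ, η ≤ 0 → φ η = 0) (y : ℝ) :
    HasDerivAt (hEV φ) (gEV φ y + hEV φ y) y := by
  have h1 := ((exp_mul_hasDerivAt 4 y).mul
    (abel_exp_hasDerivAt hφ hφ0 (s := 3 / 2) (by norm_num) y)).const_mul (4 * Real.pi / 3)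
  have h2 : hEV φ = fun y => 4 * Real.pi / 3 * (Real.exp (4 * y) *
      abelI (thetaEV φ) (3 / 2) (Real.exp (-2 * y))) := by
    funext y; rw [hEV_eq hφ hφ0]; ring
  rw [gEV_eq hφ hφ0, hEV_eq hφ hφ0, h2]
  refine h1.congr_deriv ?_
  have h5 : Real.exp (2 * y) = Real.exp (4 * y) * Real.exp (-2 * y) := by
    rw [← Real.exp_add]; ring_nf
  rw [h5, show (3 : ℝ) / 2 - 1 = 1 / 2 by norm_num]
  ring

/-- The derivative of `gEV φ`. -/
def gEV' (φ : ℝ → ℝ) (y : ℝ) : ℝ :=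
  4 * Real.pi * (4 * Real.exp (4 * y) * abelI (thetaEV φ) (3 / 2) (Real.exp (-2 * y))
      + 5 * Real.exp (2 * y) * abelI (thetaEV φ) (1 / 2) (Real.exp (-2 * y))
      + abelI (thetaEV φ) (-1 / 2) (Real.exp (-2 * y)))

lemma gEV_hasDerivAt {φ : ℝ → ℝ} (hφ : Continuous φ) (hφ0 : ∀ η : ℝ, η ≤ 0 → φ η = 0) (y : ℝ) :
    HasDerivAt (gEV φ) (gEV' φ y) y := by
  have h1 := (((exp_mul_hasDerivAt 4 y).mul
    (abel_exp_hasDerivAt hφ hφ0 (s := 3 / 2) (by norm_num) y)).add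
    ((exp_mul_hasDerivAt 2 y).mul
    (abel_exp_hasDerivAt hφ hφ0 (s := 1 / 2) (by norm_num) y))).const_mul (4 * Real.pi)
  rw [show gEV φ = _ from funext (gEV_eq hφ hφ0)]
  refine h1.congr_deriv ?_
  have h5 : Real.exp (2 * y) = Real.exp (4 * y) * Real.exp (-2 * y) := by
    rw [← Real.exp_add]; ring_nf
  have h6 : Real.exp (2 * y) * Real.exp (-2 * y) = 1 := by
    rw [← Real.exp_add]; simp
  rw [show (3 : ℝ) / 2 - 1 = 1 / 2 by norm_num, show (1 : ℝ) / 2 - 1 = -1 / 2 by norm_num, gEV']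
  linear_combination (-4 * Real.pi * 3 * abelI (thetaEV φ) (1 / 2) (Real.exp (-2 * y))) * h5 +
    (4 * Real.pi * abelI (thetaEV φ) (-1 / 2) (Real.exp (-2 * y))) * h6

lemma gEV'_continuous {φ : ℝ → ℝ} (hφ : Continuous φ) : Continuous (gEV' φ) := by
  have h : ∀ s : ℝ, -1 < s → Continuous (fun y => abelI (thetaEV φ) s (Real.exp (-2 * y))) := by
    intro s hs
    rw [continuous_iff_continuousAt]
    intro y
    exact ContinuousAt.comp (f := fun y : ℝ => Real.exp (-2 * y))
      (abelI_continuousAt (thetaEV_contOn hφ) hs (Real.exp_pos _)) (by fun_prop)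
  have h1 := h (3 / 2) (by norm_num)
  have h2 := h (1 / 2) (by norm_num)
  have h3 := h (-1 / 2) (by norm_num)
  unfold gEV'
  fun_prop

lemma gEV'_nonneg {φ : ℝ → ℝ} (hφ : ∀ η, 0 ≤ φ η) (y : ℝ) : 0 ≤ gEV' φ y := by
  have h := fun s => abelI_nonneg (thetaEV_nonneg hφ) s (Real.exp (-2 * y))
  have h1 := h (3 / 2)
  have h2 := h (1 / 2)
  have h3 := h (-1 / 2)
  unfold gEV'
  positivity

lemma gEV_contDiff {φ : ℝ → ℝ} (hφ : Continuous φ) (hφ0 : ∀ η : ℝ, η ≤ 0 → φ η = 0) :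
    ContDiff ℝ 1 (gEV φ) := by
  rw [contDiff_one_iff_deriv]
  refine ⟨fun y => (gEV_hasDerivAt hφ hφ0 y).differentiableAt, ?_⟩
  rw [show deriv (gEV φ) = gEV' φ from funext fun y => (gEV_hasDerivAt hφ hφ0 y).deriv]
  exact gEV'_continuous hφ

lemma hEV_contDiff {φ : ℝ → ℝ} (hφ : Continuous φ) (hφ0 : ∀ η : ℝ, η ≤ 0 → φ η = 0) :
    ContDiff ℝ 1 (hEV φ) := by
  rw [contDiff_one_iff_deriv]
  have hd : Differentiable ℝ (hEV φ) := fun y => (hEV_hasDerivAt hφ hφ0 y).differentiableAt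
  refine ⟨hd, ?_⟩
  rw [show deriv (hEV φ) = _ from funext fun y => (hEV_hasDerivAt hφ hφ0 y).deriv]
  exact (gEV_contDiff hφ hφ0).continuous.add hd.continuous

lemma gEV_nonneg {φ : ℝ → ℝ} (hφc : Continuous φ) (hφ0 : ∀ η : ℝ, η ≤ 0 → φ η = 0)
    (hφ : ∀ η, 0 ≤ φ η) (y : ℝ) : 0 ≤ gEV φ y := by
  have h := fun s => abelI_nonneg (thetaEV_nonneg hφ) s (Real.exp (-2 * y))
  have h1 := h (3 / 2)
  have h2 := h (1 / 2)
  rw [gEV_eq hφc hφ0]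
  positivity

lemma hEV_nonneg {φ : ℝ → ℝ} (hφc : Continuous φ) (hφ0 : ∀ η : ℝ, η ≤ 0 → φ η = 0)
    (hφ : ∀ η, 0 ≤ φ η) (y : ℝ) : 0 ≤ hEV φ y := by
  have h1 := abelI_nonneg (thetaEV_nonneg hφ) (3 / 2) (Real.exp (-2 * y))
  rw [hEV_eq hφc hφ0]
  positivity

lemma gEV_monotone {φ : ℝ → ℝ} (hφc : Continuous φ) (hφ0 : ∀ η : ℝ, η ≤ 0 → φ η = 0)
    (hφ : ∀ η, 0 ≤ φ η) : Monotone (gEV φ) :=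
  monotone_of_deriv_nonneg (fun y => (gEV_hasDerivAt hφc hφ0 y).differentiableAt)
    (fun y => by rw [(gEV_hasDerivAt hφc hφ0 y).deriv]; exact gEV'_nonneg hφ y)

lemma hEV_monotone {φ : ℝ → ℝ} (hφc : Continuous φ) (hφ0 : ∀ η : ℝ, η ≤ 0 → φ η = 0)
    (hφ : ∀ η, 0 ≤ φ η) : Monotone (hEV φ) :=
  monotone_of_deriv_nonneg (fun y => (hEV_hasDerivAt hφc hφ0 y).differentiableAt)
    (fun y => by
      rw [(hEV_hasDerivAt hφc hφ0 y).deriv]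
      exact add_nonneg (gEV_nonneg hφc hφ0 hφ y) (hEV_nonneg hφc hφ0 hφ y))

/-- Near the vacuum `y = 0` the growth condition `φ(η) ≥ C η^k` gives `g(y) ≥ c y^(k+3/2)`. Only
the part `η ∈ [u/4, u/2]`, `u = 1 - e^{-y}`, of the integral is needed. -/
lemma gEV_lower {φ : ℝ → ℝ} (hφc : Continuous φ) (hφ : ∀ η, 0 ≤ φ η)
    {C η₀ k : ℝ} (hC : 0 < C) (hη₀ : 0 < η₀) (hk : 0 < k)
    (hgrowth : ∀ η : ℝ, 0 < η → η < η₀ → C * η ^ k ≤ φ η) :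
    ∃ c y₀ : ℝ, 0 < c ∧ 0 < y₀ ∧ ∀ y, 0 < y → y < y₀ → c * y ^ (k + 3 / 2) ≤ gEV φ y := by
  refine ⟨C * (1 / 8) ^ k * (1 / 64), min (1 / 2) η₀, by positivity, by positivity, ?_⟩
  intro y hy hy0
  have hy1 : y < 1 / 2 := lt_of_lt_of_le hy0 (min_le_left _ _)
  have hy2 : y < η₀ := lt_of_lt_of_le hy0 (min_le_right _ _)
  set u := 1 - Real.exp (-y) with hu
  have hu1 : u ≤ y := by have := Real.add_one_le_exp (-y); linarith
  have hu2 : y / 2 ≤ u := by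
    have h1 : Real.exp (-y) * (1 + y) ≤ 1 := by
      have := Real.add_one_le_exp y
      calc Real.exp (-y) * (1 + y) ≤ Real.exp (-y) * Real.exp y := by
            gcongr; linarith
        _ = 1 := by rw [← Real.exp_add]; simp
    have h2 := Real.exp_pos (-y)
    nlinarith
  have hx : Real.exp (-2 * y) = (1 - u) ^ 2 := by
    rw [hu, sub_sub_cancel, ← Real.exp_nat_mul]; ring_nf
  have hu0 : 0 < u := by linarith
  set f : ℝ → ℝ := fun η => φ η * (1 - η) ^ 2 * Real.sqrt ((1 - η) ^ 2 - Real.exp (-2 * y)) with hf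
  have hfc : Continuous f := by rw [hf]; fun_prop
  have hf0 : ∀ η, 0 ≤ f η := fun η => by
    have := hφ η
    rw [hf]; positivity
  have hfl : ∀ η ∈ Icc (u / 4) (u / 2), C * (y / 8) ^ k * (1 / 4) * (Real.sqrt y / 2) ≤ f η := by
    intro η hη
    have ha : C * (y / 8) ^ k ≤ φ η := by
      refine le_trans ?_ (hgrowth η (by linarith [hη.1]) (by linarith [hη.2]))
      have : y / 8 ≤ η := by linarith [hη.1]
      gcongr
    have hb : (1 / 4 : ℝ) ≤ (1 - η) ^ 2 := by
      have : 1 / 2 ≤ 1 - η := by linarith [hη.2]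
      nlinarith
    have hc : Real.sqrt y / 2 ≤ Real.sqrt ((1 - η) ^ 2 - Real.exp (-2 * y)) := by
      refine Real.le_sqrt_of_sq_le ?_
      rw [div_pow, Real.sq_sqrt hy.le, hx]
      have h1 : η ≤ u / 2 := hη.2
      nlinarith [mul_nonneg (sub_nonneg.2 h1) hu0.le, mul_nonneg (sub_nonneg.2 h1) hy.le]
    have := hφ η
    calc C * (y / 8) ^ k * (1 / 4) * (Real.sqrt y / 2) ≤ φ η * (1 - η) ^ 2 *
        Real.sqrt ((1 - η) ^ 2 - Real.exp (-2 * y)) := by gcongr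
      _ = f η := rfl
  have hint : (u / 2 - u / 4) * (C * (y / 8) ^ k * (1 / 4) * (Real.sqrt y / 2)) ≤
      ∫ η in (0 : ℝ)..u, f η := by
    calc (u / 2 - u / 4) * (C * (y / 8) ^ k * (1 / 4) * (Real.sqrt y / 2))
        = ∫ η in (u / 4)..(u / 2), C * (y / 8) ^ k * (1 / 4) * (Real.sqrt y / 2) := by
          rw [intervalIntegral.integral_const, smul_eq_mul]
      _ ≤ ∫ η in (u / 4)..(u / 2), f η :=
          intervalIntegral.integral_mono_on (by linarith) (by simp) (hfc.intervalIntegrable _ _) hfl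
      _ ≤ ∫ η in (0 : ℝ)..u, f η :=
          intervalIntegral.integral_mono_interval (by linarith) (by linarith) (by linarith)
            (ae_of_all _ hf0) (hfc.intervalIntegrable _ _)
  rw [gEV, if_pos hy]
  have hpi := Real.pi_gt_three
  have hexp : 1 ≤ Real.exp (4 * y) := Real.one_le_exp (by linarith)
  have hA : 1 ≤ 4 * Real.pi * Real.exp (4 * y) := by nlinarith
  have hI : 0 ≤ ∫ η in (0 : ℝ)..u, f η := intervalIntegral.integral_nonneg hu0.le (fun η _ => hf0 η)
  have hpow : y ^ (k + 3 / 2) = y ^ k * (y * Real.sqrt y) := by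
    rw [Real.rpow_add hy, show (3 : ℝ) / 2 = 1 + 1 / 2 by norm_num, Real.rpow_add hy,
      Real.rpow_one, Real.sqrt_eq_rpow]
  have hpow2 : (y / 8) ^ k = (1 / 8) ^ k * y ^ k := by
    rw [← Real.mul_rpow (by norm_num) hy.le]; congr 1; ring
  have hfin : C * (1 / 8) ^ k * (1 / 64) * y ^ (k + 3 / 2) ≤ ∫ η in (0 : ℝ)..u, f η := by
    refine le_trans ?_ hint
    rw [hpow, hpow2]
    have : 0 ≤ C * ((1 / 8) ^ k * y ^ k) * Real.sqrt y * (1 / 8) := by positivity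
    nlinarith
  calc _ ≤ ∫ η in (0 : ℝ)..u, f η := hfin
    _ ≤ _ := le_mul_of_one_le_left hI hA

/-! ### Mass function and Buchdahl inequality -/

/-- The mass function `4π ∫₀^r G(y(s)) s² ds` of an arbitrary density profile `G`. -/
def massG (G y : ℝ → ℝ) (r : ℝ) : ℝ := 4 * Real.pi * ∫ s in (0 : ℝ)..r, G (y s) * s ^ 2

lemma massG_hasDerivAt {G y : ℝ → ℝ} (hG : Continuous G) (hy : Continuous y) (r : ℝ) :
    HasDerivAt (massG G y) (4 * Real.pi * (G (y r) * r ^ 2)) r := by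
  have hc : Continuous (fun s => G (y s) * s ^ 2) := by fun_prop
  exact (intervalIntegral.integral_hasDerivAt_right (hc.intervalIntegrable _ _)
    (hc.stronglyMeasurableAtFilter _ _) hc.continuousAt).const_mul _

lemma massG_continuous {G y : ℝ → ℝ} (hG : Continuous G) (hy : Continuous y) :
    Continuous (massG G y) :=
  continuous_iff_continuousAt.2 fun r => (massG_hasDerivAt hG hy r).continuousAt

lemma massG_sub_le {G₁ y₁ G₂ y₂ : ℝ → ℝ} (hG₁ : Continuous G₁) (hy₁ : Continuous y₁)
    (hG₂ : Continuous G₂) (hy₂ : Continuous y₂) {B r : ℝ}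
    (hB : ∀ t, |t| ≤ |r| → 0 ≤ t * r → |G₁ (y₁ t) - G₂ (y₂ t)| ≤ B) :
    |massG G₁ y₁ r - massG G₂ y₂ r| ≤ 4 * Real.pi * B * |r| ^ 3 := by
  have hc₁ : Continuous (fun s => G₁ (y₁ s) * s ^ 2) := by fun_prop
  have hc₂ : Continuous (fun s => G₂ (y₂ s) * s ^ 2) := by fun_prop
  unfold massG
  rw [← mul_sub, ← intervalIntegral.integral_sub (hc₁.intervalIntegrable _ _)
    (hc₂.intervalIntegrable _ _), abs_mul, abs_of_pos (by positivity : 0 < 4 * Real.pi)]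
  have h := intervalIntegral.norm_integral_le_of_norm_le_const (a := 0) (b := r)
    (C := B * |r| ^ 2) (f := fun s => G₁ (y₁ s) * s ^ 2 - G₂ (y₂ s) * s ^ 2) ?_
  · rw [Real.norm_eq_abs, sub_zero] at h
    calc _ ≤ 4 * Real.pi * (B * |r| ^ 2 * |r|) := by gcongr
      _ = _ := by ring
  · intro t ht
    have ht' : |t| ≤ |r| ∧ 0 ≤ t * r := by
      rcases le_total 0 r with hr | hr
      · rw [uIoc_of_le hr] at ht
        rw [abs_of_pos ht.1, abs_of_nonneg hr]
        exact ⟨ht.2, mul_nonneg ht.1.le hr⟩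
      · rw [uIoc_of_ge hr] at ht
        rw [abs_of_nonpos ht.2, abs_of_nonpos hr]
        exact ⟨by linarith [ht.1], mul_nonneg_of_nonpos_of_nonpos ht.2 hr⟩
    rw [Real.norm_eq_abs, ← sub_mul, abs_mul, abs_pow]
    have := hB t ht'.1 ht'.2
    have h0 : 0 ≤ B := (abs_nonneg _).trans this
    have := ht'.1
    gcongr

lemma massG_abs_le {G y : ℝ → ℝ} (hG : Continuous G) (hy : Continuous y) {B : ℝ}
    (hB : ∀ t, |G t| ≤ B) (r : ℝ) : |massG G y r| ≤ 4 * Real.pi * B * |r| ^ 3 := by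
  have h := massG_sub_le (G₂ := fun _ => 0) hG hy continuous_const hy (B := B) (r := r)
    (fun t _ _ => by simpa using hB (y t))
  have h0 : massG (fun _ => 0) y r = 0 := by simp [massG]
  rwa [h0, sub_zero] at h

lemma massG_nonneg {G y : ℝ → ℝ} (hG : ∀ t, 0 ≤ G t) {r : ℝ} (hr : 0 ≤ r) :
    0 ≤ massG G y r :=
  mul_nonneg (by positivity)
    (intervalIntegral.integral_nonneg hr fun t _ => mul_nonneg (hG _) (sq_nonneg t))

lemma massG_monotoneOn {G y : ℝ → ℝ} (hGc : Continuous G) (hy : Continuous y)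
    (hG : ∀ t, 0 ≤ G t) : Monotone (massG G y) :=
  monotone_of_deriv_nonneg (fun r => (massG_hasDerivAt hGc hy r).differentiableAt)
    (fun r => by
      rw [(massG_hasDerivAt hGc hy r).deriv]
      have := hG (y r)
      positivity)

/-- A lower density bound on `(0, r)` bounds the mass below. -/
lemma massG_lower {G y : ℝ → ℝ} (hGc : Continuous G) (hy : Continuous y) {r γ : ℝ} (hr : 0 ≤ r)
    (hγ : ∀ t, 0 ≤ t → t ≤ r → γ ≤ G (y t)) :
    4 * Real.pi / 3 * γ * r ^ 3 ≤ massG G y r := by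
  have hc : Continuous (fun s => G (y s) * s ^ 2) := by fun_prop
  have h : ∫ s in (0 : ℝ)..r, γ * s ^ 2 ≤ ∫ s in (0 : ℝ)..r, G (y s) * s ^ 2 := by
    refine intervalIntegral.integral_mono_on hr
      ((by fun_prop : Continuous fun s : ℝ => γ * s ^ 2).intervalIntegrable _ _)
      (hc.intervalIntegrable _ _) (fun t ht => ?_)
    exact mul_le_mul_of_nonneg_right (hγ t ht.1 ht.2) (sq_nonneg t)
  rw [intervalIntegral.integral_const_mul, integral_pow] at h
  unfold massG
  have hpi := Real.pi_pos
  calc 4 * Real.pi / 3 * γ * r ^ 3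
      = 4 * Real.pi * (γ * ((r ^ (2 + 1) - 0 ^ (2 + 1)) / ((2 : ℕ) + 1))) := by
        push_cast; ring
    _ ≤ _ := by gcongr

/-- The right-hand side of the structure equation. -/
def rhsEV (g h y : ℝ → ℝ) (r : ℝ) : ℝ :=
  -(1 - 2 * massG g y r / r)⁻¹ * (massG g y r / r ^ 2 + 4 * Real.pi * r * h (y r))

lemma rhsEV_nonpos {g h y : ℝ → ℝ} (hg0 : ∀ t, 0 ≤ g t) (hh0 : ∀ t, 0 ≤ h t) {r : ℝ}
    (hr : 0 < r) (hm : 2 * massG g y r < r) :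
    rhsEV g h y r ≤ -(massG g y r / r ^ 2 + 4 * Real.pi * r * h (y r)) := by
  have hM := massG_nonneg (y := y) hg0 hr.le
  have hX : 0 ≤ massG g y r / r ^ 2 + 4 * Real.pi * r * h (y r) := by
    have := hh0 (y r)
    positivity
  have hA0 : 0 < 1 - 2 * massG g y r / r := by
    rw [sub_pos, div_lt_one hr]; exact hm
  have hA : 1 ≤ (1 - 2 * massG g y r / r)⁻¹ := by
    refine (one_le_inv₀ hA0).2 ?_
    have : 0 ≤ 2 * massG g y r / r := by positivity
    linarith
  unfold rhsEV
  nlinarith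

/-- Solutions are nonincreasing as long as `2m < r`. -/
lemma sol_antitoneOn {g h y : ℝ → ℝ} (hg0 : ∀ t, 0 ≤ g t) (hh0 : ∀ t, 0 ≤ h t)
    (hy : Continuous y) {R : ℝ}
    (hsol : ∀ r, 0 < r → r ≤ R → 2 * massG g y r < r ∧ HasDerivAt y (rhsEV g h y r) r) :
    AntitoneOn y (Icc 0 R) := by
  refine antitoneOn_of_deriv_nonpos (convex_Icc 0 R) hy.continuousOn ?_ ?_
  · intro r hr
    rw [interior_Icc] at hr
    exact (hsol r hr.1 hr.2.le).2.differentiableAt.differentiableWithinAt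
  · intro r hr
    rw [interior_Icc] at hr
    have h1 := hsol r hr.1 hr.2.le
    rw [h1.2.deriv]
    refine (rhsEV_nonpos hg0 hh0 hr.1 h1.1).trans ?_
    have hM := massG_nonneg (y := y) hg0 hr.1.le
    have := hh0 (y r)
    have := hr.1
    have : 0 ≤ massG g y r / r ^ 2 + 4 * Real.pi * r * h (y r) := by positivity
    linarith

/-- A Buchdahl-type inequality. With `v = e^{-y}` and `w = √(1-2m/r)`, the quantity
`Q = w v'/r = v (m/r³ + 4πσ)/w` satisfies `Q' = (v/w) (m/r³)' ≤ 0`, so that `v' ≥ r Q(R)` on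
`(0,R)`. Integrating gives `v(R) > v(R) m(R)/(2 R w(R))`, which forces `w(R) > 1/5`. -/
theorem buchdahl {g h y : ℝ → ℝ} (hg : Continuous g) (hgm : Monotone g) (hg0 : ∀ t, 0 ≤ g t)
    (hh0 : ∀ t, 0 ≤ h t) (hh : ∀ t, HasDerivAt h (g t + h t) t) (hy : Continuous y) {R : ℝ}
    (hR : 0 < R)
    (hsol : ∀ r, 0 < r → r ≤ R → 2 * massG g y r < r ∧ HasDerivAt y (rhsEV g h y r) r) :
    1 / 25 < 1 - 2 * massG g y R / R := by
  have hpi := Real.pi_pos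
  have hanti := sol_antitoneOn hg0 hh0 hy hsol
  set m := massG g y with hm
  set v : ℝ → ℝ := fun r => Real.exp (-y r) with hv
  set w : ℝ → ℝ := fun r => Real.sqrt (1 - 2 * m r / r) with hw
  set X : ℝ → ℝ := fun r => m r / r ^ 3 + 4 * Real.pi * h (y r) with hX
  set Q : ℝ → ℝ := fun r => v r * X r / w r with hQ
  have hvpos : ∀ r, 0 < v r := fun r => Real.exp_pos _
  have hApos : ∀ r, 0 < r → r ≤ R → 0 < 1 - 2 * m r / r := by
    intro r hr hrR
    rw [sub_pos, div_lt_one hr]; exact (hsol r hr hrR).1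
  have hwpos : ∀ r, 0 < r → r ≤ R → 0 < w r := fun r hr hrR => Real.sqrt_pos.2 (hApos r hr hrR)
  have hwsq : ∀ r, 0 < r → r ≤ R → w r ^ 2 = 1 - 2 * m r / r := fun r hr hrR =>
    Real.sq_sqrt (hApos r hr hrR).le
  have hmnn : ∀ r, 0 < r → 0 ≤ m r := fun r hr => massG_nonneg hg0 hr.le
  have hw1 : ∀ r, 0 < r → w r ≤ 1 := by
    intro r hr
    refine Real.sqrt_le_one.2 ?_
    have := hmnn r hr
    have : 0 ≤ 2 * m r / r := by positivity
    linarith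
  have hXnn : ∀ r, 0 < r → 0 ≤ X r := by
    intro r hr
    have := hmnn r hr
    have := hh0 (y r)
    simp only [hX]; positivity
  have hvd : ∀ r, 0 < r → r ≤ R → HasDerivAt v (r * Q r / w r) r := by
    intro r hr hrR
    have h1 := (hsol r hr hrR).2.neg.exp
    refine h1.congr_deriv ?_
    have hwr := hwpos r hr hrR
    have : rhsEV g h y r = -(w r ^ 2)⁻¹ * (r * X r) := by
      rw [rhsEV, hwsq r hr hrR]
      congr 1
      simp only [hX]
      field_simp
      rfl
    rw [this]
    simp only [hQ, hv, Pi.neg_apply]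
    field_simp
  have hQd : ∀ r, 0 < r → r ≤ R →
      HasDerivAt Q (v r / w r * ((4 * Real.pi * g (y r) - 3 * (m r / r ^ 3)) / r)) r := by
    intro r hr hrR
    have hwr := hwpos r hr hrR
    have hmd : HasDerivAt m (4 * Real.pi * (g (y r) * r ^ 2)) r := massG_hasDerivAt hg hy r
    have hqd := hmd.div (hasDerivAt_pow 3 r) (by positivity)
    have hσd := ((hh (y r)).comp r (hsol r hr hrR).2).const_mul (4 * Real.pi)
    have hXd := hqd.add hσd
    have hAd := ((hmd.const_mul 2).div (hasDerivAt_id r) hr.ne').const_sub 1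
    have hwd := hAd.sqrt (hApos r hr hrR).ne'
    have hfin := ((hvd r hr hrR).mul hXd).div hwd hwr.ne'
    refine hfin.congr_deriv ?_
    have e1 : rhsEV g h y r = -(w r ^ 2)⁻¹ * (r * X r) := by
      rw [rhsEV, hwsq r hr hrR]
      congr 1
      simp only [hX]
      field_simp
      rfl
    have e2 := hwsq r hr hrR
    rw [e1]
    change _ / w r ^ 2 = _
    have e3 : m r = r * (1 - w r ^ 2) / 2 := by
      rw [e2]; field_simp; ring
    have e4 : Real.sqrt (1 - 2 * m r / r) = w r := rfl
    simp only [hQ, Pi.add_apply, Pi.div_apply, Pi.mul_apply, Function.comp_apply, id_eq, e4]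
    simp only [hX]
    rw [e3]
    generalize v r = V
    generalize w r = W at hwr
    norm_num
    field_simp
    ring
  have hQanti : AntitoneOn Q (Ioc 0 R) := by
    refine antitoneOn_of_deriv_nonpos (convex_Ioc 0 R) ?_ ?_ ?_
    · exact fun r hr => (hQd r hr.1 hr.2).continuousAt.continuousWithinAt
    · intro r hr
      have hr' := interior_subset hr
      exact (hQd r hr'.1 hr'.2).differentiableAt.differentiableWithinAt
    · intro r hr
      have hr' := interior_subset hr
      have hr0 : 0 < r := hr'.1
      rw [(hQd r hr0 hr'.2).deriv]
      refine mul_nonpos_of_nonneg_of_nonpos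
        (div_nonneg (hvpos r).le (hwpos r hr0 hr'.2).le) ?_
      refine div_nonpos_of_nonpos_of_nonneg ?_ hr0.le
      have h1 : 4 * Real.pi / 3 * g (y r) * r ^ 3 ≤ m r := massG_lower hg hy hr0.le
        (fun t ht htr => hgm (hanti ⟨ht, htr.trans hr'.2⟩ ⟨hr0.le, hr'.2⟩ htr))
      have h2 : 4 * Real.pi / 3 * g (y r) ≤ m r / r ^ 3 := by
        rw [le_div_iff₀ (by positivity)]; exact h1
      linarith
  have hQR : 0 ≤ Q R := div_nonneg (mul_nonneg (hvpos R).le (hXnn R hR)) (hwpos R hR le_rfl).le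
  have hmono : MonotoneOn (fun r => v r - Q R * r ^ 2 / 2) (Icc 0 R) := by
    refine monotoneOn_of_deriv_nonneg (convex_Icc 0 R) (by fun_prop) ?_ ?_
    · intro r hr
      rw [interior_Icc] at hr
      have := (hvd r hr.1 hr.2.le).differentiableAt
      exact (this.sub (by fun_prop)).differentiableWithinAt
    · intro r hr
      rw [interior_Icc] at hr
      have h1 := (hvd r hr.1 hr.2.le).sub
        (((hasDerivAt_pow 2 r).const_mul (Q R)).div_const 2)
      change 0 ≤ deriv (v - fun r => Q R * r ^ 2 / 2) r
      rw [h1.deriv]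
      have h2 : Q R ≤ Q r := hQanti ⟨hr.1, hr.2.le⟩ ⟨hR, le_rfl⟩ hr.2.le
      have hwr := hwpos r hr.1 hr.2.le
      have h3 : r * Q R ≤ r * Q r / w r := by
        have hr0 := hr.1
        rw [le_div_iff₀ hwr]
        have : r * Q R * w r ≤ r * Q R * 1 := by
          have := hw1 r hr0
          gcongr
        have : r * Q R ≤ r * Q r := by gcongr
        linarith
      norm_num
      linarith
  have h1 := hmono ⟨le_rfl, hR.le⟩ ⟨hR.le, le_rfl⟩ hR.le
  simp only [] at h1
  have h2 : Q R * R ^ 2 / 2 < v R := by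
    have := hvpos 0
    norm_num at h1
    linarith
  have hwR := hwpos R hR le_rfl
  have hvR := hvpos R
  have h3 : v R * (m R / R ^ 3) / w R ≤ Q R := by
    have := hh0 (y R)
    have h4 : m R / R ^ 3 ≤ X R := by simp only [hX]; nlinarith
    simp only [hQ]
    gcongr
  have h5 : v R * ((m R / R) / (2 * w R)) < v R * 1 := by
    calc v R * ((m R / R) / (2 * w R)) = v R * (m R / R ^ 3) / w R * R ^ 2 / 2 := by
          field_simp
      _ ≤ Q R * R ^ 2 / 2 := by gcongr
      _ < v R * 1 := by linarith
  have h6 := lt_of_mul_lt_mul_left h5 hvR.le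
  rw [div_lt_one (by positivity)] at h6
  have h7 := hwsq R hR le_rfl
  have h8 : 2 * m R / R = 2 * (m R / R) := by ring
  rw [← h7]
  rw [h8] at h7
  nlinarith

/-! ### A Volterra equation -/

/-- The exponential weight with `W' = 2c (r + r³) W` for which the Volterra operator contracts. -/
def volW (c r : ℝ) : ℝ := Real.exp (c * (r ^ 2 + r ^ 4 / 2))

lemma volW_pos (c r : ℝ) : 0 < volW c r := Real.exp_pos _

lemma volW_continuous (c : ℝ) : Continuous (volW c) := by unfold volW; fun_prop

lemma volW_one_le {c : ℝ} (hc : 0 < c) (r : ℝ) : 1 ≤ volW c r := Real.one_le_exp (by positivity)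

lemma volW_max_le {c : ℝ} (hc : 0 < c) (r : ℝ) : volW c (max r 0) ≤ volW c r := by
  rcases le_total 0 r with h | h
  · rw [max_eq_left h]
  · rw [max_eq_right h]
    simpa [volW] using volW_one_le hc r

lemma volW_mono {c : ℝ} (hc : 0 < c) {s r : ℝ} (hs : 0 ≤ s) (h : s ≤ r) : volW c s ≤ volW c r := by
  unfold volW; gcongr

lemma volW_integral (c r : ℝ) :
    ∫ s in (0 : ℝ)..r, c * (s + s ^ 3) * volW c s = (volW c r - 1) / 2 := by
  have hd : ∀ s, HasDerivAt (fun s => volW c s / 2) (c * (s + s ^ 3) * volW c s) s := by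
    intro s
    have h1 := ((((hasDerivAt_pow 2 s).add ((hasDerivAt_pow 4 s).div_const 2)).const_mul c).exp).div_const 2
    refine h1.congr_deriv ?_
    simp only [volW, Pi.add_apply]
    norm_num
    ring
  rw [intervalIntegral.integral_eq_sub_of_hasDerivAt (fun s _ => hd s)
    (by have := volW_continuous c; exact Continuous.intervalIntegrable (by fun_prop) _ _)]
  simp [volW]
  ring

/-- Global existence and uniqueness for the Volterra equation `y(r) = κ + ∫₀^r F[y]`, extended by
`y = κ` for `r ≤ 0`, where `F[y](s)` depends on `y` restricted to `[0,s]` in a Lipschitz way with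
constant `c (s + s³)`. In the norm `sup |y - κ| / W` the right-hand side is a contraction. -/
theorem volterra (κ : ℝ) {F : (ℝ → ℝ) → ℝ → ℝ} {c : ℝ} (hc : 0 < c)
    (hFc : ∀ y, Continuous y → Continuous (F y))
    (hFb : ∀ y, Continuous y → ∀ s, 0 ≤ s → |F y s| ≤ c * (s + s ^ 3))
    (hFl : ∀ y₁ y₂, Continuous y₁ → Continuous y₂ → ∀ s, 0 ≤ s → ∀ D,
      (∀ t, 0 ≤ t → t ≤ s → |y₁ t - y₂ t| ≤ D) → |F y₁ s - F y₂ s| ≤ c * (s + s ^ 3) * D) :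
    ∃ y, Continuous y ∧ (∀ r, y r = κ + ∫ s in (0 : ℝ)..(max r 0), F y s) ∧
      ∀ y', Continuous y' → (∀ r, y' r = κ + ∫ s in (0 : ℝ)..(max r 0), F y' s) → y' = y := by
  have hWc := volW_continuous c
  have hWp := volW_pos c
  have hint : ∀ y, Continuous y → Continuous (fun r => ∫ s in (0 : ℝ)..(max r 0), F y s) := by
    intro y hy
    have h1 := intervalIntegral.continuous_primitive
      (fun a b => (hFc y hy).intervalIntegrable (μ := volume) a b) 0
    exact h1.comp (continuous_id.max continuous_const)
  have hkey : ∀ r (f : ℝ → ℝ) (D : ℝ), 0 ≤ D → Continuous f →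
      (∀ s, 0 ≤ s → s ≤ max r 0 → |f s| ≤ c * (s + s ^ 3) * (volW c s * D)) →
      |(volW c r)⁻¹ * ∫ s in (0 : ℝ)..(max r 0), f s| ≤ D / 2 := by
    intro r f D hD hf hfb
    have h1 : ‖∫ s in (0 : ℝ)..(max r 0), f s‖ ≤
        ∫ s in (0 : ℝ)..(max r 0), D * (c * (s + s ^ 3) * volW c s) := by
      refine intervalIntegral.norm_integral_le_of_norm_le (le_max_right r 0)
        (ae_of_all _ fun s hs => ?_) (Continuous.intervalIntegrable (by fun_prop) _ _)
      rw [Real.norm_eq_abs]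
      refine (hfb s hs.1.le hs.2).trans (le_of_eq (by ring))
    rw [intervalIntegral.integral_const_mul, volW_integral, Real.norm_eq_abs] at h1
    rw [abs_mul, abs_of_pos (inv_pos.2 (hWp r)), inv_mul_le_iff₀ (hWp r)]
    have h2 := volW_max_le hc r
    nlinarith [hWp r]
  have hbd : ∀ y, Continuous y → ∀ r,
      |(volW c r)⁻¹ * ∫ s in (0 : ℝ)..(max r 0), F y s| ≤ 1 / 2 := by
    intro y hy r
    refine hkey r (F y) 1 zero_le_one (hFc y hy) (fun s hs _ => (hFb y hy s hs).trans ?_)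
    have := volW_one_le hc s
    rw [mul_one]
    exact le_mul_of_one_le_right (by positivity) this
  let Y : BoundedContinuousFunction ℝ ℝ → ℝ → ℝ := fun z r => κ + volW c r * z r
  have hY : ∀ z, Continuous (Y z) := fun z => by
    have := z.continuous
    exact continuous_const.add (hWc.mul this)
  have hTc : ∀ y, Continuous y →
      Continuous (fun r => (volW c r)⁻¹ * ∫ s in (0 : ℝ)..(max r 0), F y s) := fun y hy =>
    (hWc.inv₀ fun r => (hWp r).ne').mul (hint y hy)
  let T : BoundedContinuousFunction ℝ ℝ → BoundedContinuousFunction ℝ ℝ := fun z =>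
    BoundedContinuousFunction.ofNormedAddCommGroup
      (fun r => (volW c r)⁻¹ * ∫ s in (0 : ℝ)..(max r 0), F (Y z) s) (hTc _ (hY z)) (1 / 2)
      (fun r => by rw [Real.norm_eq_abs]; exact hbd _ (hY z) r)
  have hT : ContractingWith (1 / 2 : NNReal) T := by
    refine ⟨?_, LipschitzWith.of_dist_le_mul fun z₁ z₂ => ?_⟩
    · rw [← NNReal.coe_lt_coe]; norm_num
    · rw [BoundedContinuousFunction.dist_le (by positivity)]
      intro r
      change dist ((volW c r)⁻¹ * ∫ s in (0 : ℝ)..(max r 0), F (Y z₁) s)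
        ((volW c r)⁻¹ * ∫ s in (0 : ℝ)..(max r 0), F (Y z₂) s) ≤ _
      rw [Real.dist_eq, ← mul_sub, ← intervalIntegral.integral_sub
        ((hFc _ (hY z₁)).intervalIntegrable _ _) ((hFc _ (hY z₂)).intervalIntegrable _ _)]
      refine (hkey r (fun s => F (Y z₁) s - F (Y z₂) s) (dist z₁ z₂) dist_nonneg
        ((hFc _ (hY z₁)).sub (hFc _ (hY z₂))) ?_).trans (le_of_eq ?_)
      · intro s hs _
        refine hFl _ _ (hY z₁) (hY z₂) s hs _ (fun t ht hts => ?_)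
        have h1 : Y z₁ t - Y z₂ t = volW c t * (z₁ t - z₂ t) := by simp only [Y]; ring
        rw [h1, abs_mul, abs_of_pos (hWp t)]
        have h2 : |z₁ t - z₂ t| ≤ dist z₁ z₂ := by
          rw [← Real.dist_eq]; exact BoundedContinuousFunction.dist_coe_le_dist t
        have h3 := volW_mono hc ht hts
        have := hWp s
        gcongr
      · push_cast; ring
  have hfix := hT.fixedPoint_isFixedPt
  set z := ContractingWith.fixedPoint T hT with hz
  refine ⟨Y z, hY z, ?_, ?_⟩
  · intro r
    have h1 : T z r = z r := by rw [hfix]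
    change (volW c r)⁻¹ * ∫ s in (0 : ℝ)..(max r 0), F (Y z) s = z r at h1
    simp only [Y]
    rw [← h1, mul_inv_cancel_left₀ (hWp r).ne']
  · intro y' hy' hy'eq
    let z' : BoundedContinuousFunction ℝ ℝ := BoundedContinuousFunction.ofNormedAddCommGroup
      (fun r => (volW c r)⁻¹ * ∫ s in (0 : ℝ)..(max r 0), F y' s) (hTc _ hy') (1 / 2)
      (fun r => by rw [Real.norm_eq_abs]; exact hbd _ hy' r)
    have hYz' : Y z' = y' := by
      funext r
      change κ + volW c r * ((volW c r)⁻¹ * ∫ s in (0 : ℝ)..(max r 0), F y' s) = y' r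
      rw [mul_inv_cancel_left₀ (hWp r).ne', ← hy'eq r]
    have hfix' : Function.IsFixedPt T z' := by
      ext r
      change (volW c r)⁻¹ * ∫ s in (0 : ℝ)..(max r 0), F (Y z') s =
        (volW c r)⁻¹ * ∫ s in (0 : ℝ)..(max r 0), F y' s
      rw [hYz']
    rw [← hYz', hT.fixedPoint_unique' hfix' hfix]

/-! ### Global existence and uniqueness -/

/-- The right-hand side of the structure equation, with `1 - 2m/r` truncated from below at the value
`1/25` that solutions never reach. -/
def truncF (G H y : ℝ → ℝ) (s : ℝ) : ℝ :=
  -(max (1 - 2 * massG G y s / s) (1 / 25))⁻¹ *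
    (massG G y s / s ^ 2 + 4 * Real.pi * s * H (y s))

lemma trunc_pos (x : ℝ) : 0 < max x (1 / 25 : ℝ) := lt_max_of_lt_right (by norm_num)

lemma trunc_inv_le (x : ℝ) : (max x (1 / 25 : ℝ))⁻¹ ≤ 25 := by
  rw [inv_le_comm₀ (trunc_pos x) (by norm_num)]
  norm_num

lemma trunc_inv_sub_le (x z : ℝ) :
    |(max x (1 / 25 : ℝ))⁻¹ - (max z (1 / 25 : ℝ))⁻¹| ≤ 625 * |x - z| := by
  have hx := trunc_pos x
  have hz := trunc_pos z
  rw [inv_sub_inv hx.ne' hz.ne', div_eq_mul_inv, mul_inv, abs_mul, abs_mul,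
    abs_of_pos (inv_pos.2 hx), abs_of_pos (inv_pos.2 hz)]
  have h1 : |max z (1 / 25) - max x (1 / 25 : ℝ)| ≤ |x - z| := by
    rw [abs_sub_comm x z]; exact abs_max_sub_max_le_abs _ _ _
  have h2 := trunc_inv_le x
  have h3 := trunc_inv_le z
  have h4 := (inv_pos.2 hx).le
  have h5 := (inv_pos.2 hz).le
  calc _ ≤ |x - z| * (25 * 25) := by gcongr
    _ = _ := by ring

section Mass

variable {G y : ℝ → ℝ} {B : ℝ}

lemma mass_div_sq_le (hG : Continuous G) (hy : Continuous y) (hB : ∀ t, |G t| ≤ B) (s : ℝ) :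
    |massG G y s / s ^ 2| ≤ 4 * Real.pi * B * |s| := by
  have h0 : 0 ≤ B := (abs_nonneg _).trans (hB 0)
  rcases eq_or_ne s 0 with rfl | hs
  · simp
  rw [abs_div, abs_pow, div_le_iff₀ (by positivity)]
  exact (massG_abs_le hG hy hB s).trans (le_of_eq (by ring))

lemma mass_div_sq_continuous (hG : Continuous G) (hy : Continuous y) (hB : ∀ t, |G t| ≤ B) :
    Continuous (fun s => massG G y s / s ^ 2) := by
  rw [continuous_iff_continuousAt]
  intro s
  rcases eq_or_ne s 0 with rfl | hs
  · have h : Tendsto (fun s : ℝ => 4 * Real.pi * B * |s|) (𝓝 0) (𝓝 0) := by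
      have : Continuous (fun s : ℝ => 4 * Real.pi * B * |s|) := by fun_prop
      simpa using this.tendsto 0
    unfold ContinuousAt
    simp only [ne_eq, OfNat.ofNat_ne_zero, not_false_eq_true, zero_pow, div_zero]
    exact squeeze_zero_norm (fun s => by
      rw [Real.norm_eq_abs]; exact mass_div_sq_le hG hy hB s) h
  · exact (massG_continuous hG hy).continuousAt.div (by fun_prop) (by positivity)

lemma mass_div_eq (s : ℝ) : massG G y s / s = s * (massG G y s / s ^ 2) := by
  rcases eq_or_ne s 0 with rfl | hs
  · simp
  · field_simp

lemma one_sub_mass_continuous (hG : Continuous G) (hy : Continuous y) (hB : ∀ t, |G t| ≤ B) :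
    Continuous (fun s => 1 - 2 * massG G y s / s) := by
  have h := mass_div_sq_continuous hG hy hB
  have h2 : (fun s => 1 - 2 * massG G y s / s) =
      fun s => 1 - 2 * (s * (massG G y s / s ^ 2)) := by
    funext s; rw [← mass_div_eq, mul_div_assoc]
  rw [h2]
  fun_prop

lemma truncF_continuous {H : ℝ → ℝ} (hG : Continuous G) (hy : Continuous y)
    (hB : ∀ t, |G t| ≤ B) (hH : Continuous H) : Continuous (truncF G H y) := by
  have h := mass_div_sq_continuous hG hy hB
  have h2 := one_sub_mass_continuous hG hy hB
  unfold truncF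
  refine ((h2.max continuous_const).inv₀ fun s => (trunc_pos _).ne').neg.mul (h.add ?_)
  fun_prop

lemma truncF_abs_le {H : ℝ → ℝ} (hG : Continuous G) (hy : Continuous y)
    (hB : ∀ t, |G t| ≤ B) (hHB : ∀ t, |H t| ≤ B) {s : ℝ} (hs : 0 ≤ s) :
    |truncF G H y s| ≤ 200 * Real.pi * B * s := by
  have hpi := Real.pi_pos
  have h0 : 0 ≤ B := (abs_nonneg _).trans (hB 0)
  unfold truncF
  rw [abs_mul, abs_neg, abs_of_pos (inv_pos.2 (trunc_pos _))]
  have h1 := mass_div_sq_le hG hy hB s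
  rw [abs_of_nonneg hs] at h1
  have h2 : |4 * Real.pi * s * H (y s)| ≤ 4 * Real.pi * s * B := by
    rw [abs_mul, abs_of_nonneg (by positivity : 0 ≤ 4 * Real.pi * s)]
    have := hHB (y s)
    gcongr
  have h3 : |massG G y s / s ^ 2 + 4 * Real.pi * s * H (y s)| ≤ 8 * Real.pi * B * s :=
    (abs_add_le _ _).trans (by linarith)
  calc _ ≤ 25 * (8 * Real.pi * B * s) := by
        have := trunc_inv_le (1 - 2 * massG G y s / s)
        gcongr
    _ = _ := by ring

end Mass

lemma truncF_sub_le {G H y₁ y₂ : ℝ → ℝ} {B : ℝ} (hG : Continuous G)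
    (hy₁ : Continuous y₁) (hy₂ : Continuous y₂)
    (hB : ∀ t, |G t| ≤ B) (hHB : ∀ t, |H t| ≤ B)
    (hGL : ∀ a b, |G a - G b| ≤ B * |a - b|) (hHL : ∀ a b, |H a - H b| ≤ B * |a - b|)
    {s D : ℝ} (hs : 0 ≤ s) (hD : ∀ t, 0 ≤ t → t ≤ s → |y₁ t - y₂ t| ≤ D) :
    |truncF G H y₁ s - truncF G H y₂ s| ≤
      (200 * Real.pi * B * s + 40000 * Real.pi ^ 2 * B ^ 2 * s ^ 3) * D := by
  have hpi := Real.pi_pos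
  have h0 : 0 ≤ B := (abs_nonneg _).trans (hB 0)
  have hD0 : 0 ≤ D := (abs_nonneg _).trans (hD 0 le_rfl hs)
  have hB2 : ∀ t, 0 ≤ t → t ≤ s → |G (y₁ t) - G (y₂ t)| ≤ B * D := fun t ht hts =>
    (hGL _ _).trans (by have := hD t ht hts; gcongr)
  rcases hs.eq_or_lt with rfl | hs'
  · simp [truncF]
  have hm : |massG G y₁ s - massG G y₂ s| ≤ 4 * Real.pi * (B * D) * s ^ 3 := by
    have := massG_sub_le hG hy₁ hG hy₂ (B := B * D) (r := s) (fun t ht hts => by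
      rw [abs_of_pos hs'] at ht
      exact hB2 t (nonneg_of_mul_nonneg_left hts hs') ((le_abs_self t).trans ht))
    rwa [abs_of_pos hs'] at this
  set X₁ := massG G y₁ s / s ^ 2 + 4 * Real.pi * s * H (y₁ s) with hX₁
  set X₂ := massG G y₂ s / s ^ 2 + 4 * Real.pi * s * H (y₂ s) with hX₂
  set A₁ := (max (1 - 2 * massG G y₁ s / s) (1 / 25))⁻¹ with hA₁
  set A₂ := (max (1 - 2 * massG G y₂ s / s) (1 / 25))⁻¹ with hA₂
  have e : truncF G H y₁ s - truncF G H y₂ s = -(A₁ * (X₁ - X₂)) - (A₁ - A₂) * X₂ := by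
    simp only [truncF]; ring
  have hA1 : |A₁| ≤ 25 := by
    rw [abs_of_pos (inv_pos.2 (trunc_pos _))]; exact trunc_inv_le _
  have hX : |X₁ - X₂| ≤ 8 * Real.pi * B * s * D := by
    have e1 : X₁ - X₂ = (massG G y₁ s - massG G y₂ s) / s ^ 2 +
        4 * Real.pi * s * (H (y₁ s) - H (y₂ s)) := by rw [hX₁, hX₂]; ring
    have h1 : |(massG G y₁ s - massG G y₂ s) / s ^ 2| ≤ 4 * Real.pi * B * s * D := by
      rw [abs_div, abs_of_pos (by positivity : 0 < s ^ 2), div_le_iff₀ (by positivity)]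
      exact hm.trans (le_of_eq (by ring))
    have h2 : |4 * Real.pi * s * (H (y₁ s) - H (y₂ s))| ≤ 4 * Real.pi * s * (B * D) := by
      rw [abs_mul, abs_of_nonneg (by positivity : 0 ≤ 4 * Real.pi * s)]
      have h3 := hHL (y₁ s) (y₂ s)
      have h4 := hD s hs le_rfl
      have h5 : |H (y₁ s) - H (y₂ s)| ≤ B * D := h3.trans (by gcongr)
      gcongr
    rw [e1]
    exact (abs_add_le _ _).trans (by linarith)
  have hX2 : |X₂| ≤ 8 * Real.pi * B * s := by
    have h1 := mass_div_sq_le hG hy₂ hB s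
    rw [abs_of_nonneg hs] at h1
    have h2 : |4 * Real.pi * s * H (y₂ s)| ≤ 4 * Real.pi * s * B := by
      rw [abs_mul, abs_of_nonneg (by positivity : 0 ≤ 4 * Real.pi * s)]
      have := hHB (y₂ s)
      gcongr
    exact (abs_add_le _ _).trans (by linarith)
  have hAd : |A₁ - A₂| ≤ 5000 * Real.pi * B * s ^ 2 * D := by
    refine (trunc_inv_sub_le _ _).trans ?_
    have e1 : (1 - 2 * massG G y₁ s / s) - (1 - 2 * massG G y₂ s / s) =
        -(2 * (massG G y₁ s - massG G y₂ s) / s) := by ring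
    rw [e1, abs_neg, abs_div, abs_mul, abs_two, abs_of_pos hs']
    calc 625 * (2 * |massG G y₁ s - massG G y₂ s| / s)
        ≤ 625 * (2 * (4 * Real.pi * (B * D) * s ^ 3) / s) := by gcongr
      _ = _ := by field_simp; ring
  rw [e]
  calc |-(A₁ * (X₁ - X₂)) - (A₁ - A₂) * X₂|
      ≤ |-(A₁ * (X₁ - X₂))| + |(A₁ - A₂) * X₂| := abs_sub _ _
    _ = |A₁| * |X₁ - X₂| + |A₁ - A₂| * |X₂| := by rw [abs_neg, abs_mul, abs_mul]
    _ ≤ 25 * (8 * Real.pi * B * s * D) + 5000 * Real.pi * B * s ^ 2 * D * (8 * Real.pi * B * s) := by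
        gcongr
    _ = _ := by ring

/-- Clamping the argument to `[0,κ]` makes a `C¹` function bounded and globally Lipschitz. -/
lemma clamp_bounds {g : ℝ → ℝ} (hg : ContDiff ℝ 1 g) {κ : ℝ} (hκ : 0 < κ) :
    ∃ B, 0 < B ∧ (∀ t, |g (max 0 (min t κ))| ≤ B) ∧
      ∀ a b, |g (max 0 (min a κ)) - g (max 0 (min b κ))| ≤ B * |a - b| := by
  obtain ⟨B₁, hB₁⟩ := (isCompact_Icc (a := 0) (b := κ)).exists_bound_of_continuousOn
    hg.continuous.continuousOn
  obtain ⟨B₂, hB₂⟩ := (isCompact_Icc (a := 0) (b := κ)).exists_bound_of_continuousOn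
    (hg.continuous_deriv le_rfl).continuousOn
  have hmem : ∀ t, max 0 (min t κ) ∈ Icc 0 κ := fun t =>
    ⟨le_max_left _ _, max_le hκ.le (min_le_right _ _)⟩
  refine ⟨max (max B₁ B₂) 1, by positivity, fun t => ?_, fun a b => ?_⟩
  · exact (hB₁ _ (hmem t)).trans ((le_max_left _ _).trans (le_max_left _ _))
  · have h1 := (convex_Icc (0 : ℝ) κ).norm_image_sub_le_of_norm_deriv_le (f := g) (C := B₂)
      (fun x _ => (hg.differentiable one_ne_zero).differentiableAt) hB₂ (hmem b) (hmem a)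
    have h2 : |max 0 (min a κ) - max 0 (min b κ)| ≤ |a - b| := by
      rw [max_comm 0, max_comm 0]
      exact (abs_max_sub_max_le_abs _ _ _).trans (by
        have := abs_min_sub_min_le_max a κ b κ
        simpa using this)
    rw [Real.norm_eq_abs, Real.norm_eq_abs] at h1
    have h3 : B₂ ≤ max (max B₁ B₂) 1 := (le_max_right _ _).trans (le_max_left _ _)
    refine h1.trans ?_
    gcongr

/-- `y` solves the structure equation on `(0,∞)`, is continuous, and equals `κ` on `(-∞,0]`. -/
def ExtSol (g h : ℝ → ℝ) (κ : ℝ) (y : ℝ → ℝ) : Prop :=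
  Continuous y ∧ (∀ r, r ≤ 0 → y r = κ) ∧
    ∀ r, 0 < r → 2 * massG g y r < r ∧ HasDerivAt y (rhsEV g h y r) r

lemma ExtSol.antitoneOn {g h y : ℝ → ℝ} {κ : ℝ} (hg0 : ∀ t, 0 ≤ g t) (hh0 : ∀ t, 0 ≤ h t)
    (hy : ExtSol g h κ y) : AntitoneOn y (Ici 0) := by
  intro a ha b hb hab
  exact sol_antitoneOn hg0 hh0 hy.1 (R := b) (fun r hr _ => hy.2.2 r hr)
    ⟨ha, hab⟩ ⟨hb, le_rfl⟩ hab

lemma ExtSol.le {g h y : ℝ → ℝ} {κ : ℝ} (hg0 : ∀ t, 0 ≤ g t) (hh0 : ∀ t, 0 ≤ h t)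
    (hy : ExtSol g h κ y) (r : ℝ) : y r ≤ κ := by
  rcases le_total r 0 with hr | hr
  · exact (hy.2.1 r hr).le
  · rw [← hy.2.1 0 le_rfl]
    exact hy.antitoneOn hg0 hh0 (mem_Ici.2 le_rfl) hr hr

/-- Global existence and uniqueness: the truncated equation is solved by `volterra`, and the
Buchdahl inequality shows that the truncation is never active. -/
theorem exists_unique_extSol {g h : ℝ → ℝ} (hg : ContDiff ℝ 1 g) (hh1 : ContDiff ℝ 1 h)
    (hgm : Monotone g) (hg0 : ∀ t, 0 ≤ g t) (hh0 : ∀ t, 0 ≤ h t)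
    (hgz : ∀ t, t ≤ 0 → g t = 0) (hhz : ∀ t, t ≤ 0 → h t = 0)
    (hh : ∀ t, HasDerivAt h (g t + h t) t) {κ : ℝ} (hκ : 0 < κ) :
    ∃ y, ExtSol g h κ y ∧ ∀ y', ExtSol g h κ y' → y' = y := by
  have hpi := Real.pi_pos
  obtain ⟨B₁, hB₁, hb₁, hl₁⟩ := clamp_bounds hg hκ
  obtain ⟨B₂, hB₂, hb₂, hl₂⟩ := clamp_bounds hh1 hκ
  set G : ℝ → ℝ := fun t => g (max 0 (min t κ)) with hGdef
  set H : ℝ → ℝ := fun t => h (max 0 (min t κ)) with hHdef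
  set B := max B₁ B₂ with hB
  have hBpos : 0 < B := lt_max_of_lt_left hB₁
  have hgc := hg.continuous
  have hhc := hh1.continuous
  have hGc : Continuous G := by rw [hGdef]; fun_prop
  have hHc : Continuous H := by rw [hHdef]; fun_prop
  have hGB : ∀ t, |G t| ≤ B := fun t => (hb₁ t).trans (le_max_left _ _)
  have hHB : ∀ t, |H t| ≤ B := fun t => (hb₂ t).trans (le_max_right _ _)
  have hGL : ∀ a b, |G a - G b| ≤ B * |a - b| := fun a b => (hl₁ a b).trans (by
    gcongr; exact le_max_left _ _)
  have hHL : ∀ a b, |H a - H b| ≤ B * |a - b| := fun a b => (hl₂ a b).trans (by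
    gcongr; exact le_max_right _ _)
  have hGg : ∀ t, t ≤ κ → G t = g t := by
    intro t ht
    simp only [hGdef]
    rw [min_eq_left ht]
    rcases le_total t 0 with h0 | h0
    · rw [max_eq_left h0, hgz 0 le_rfl, hgz t h0]
    · rw [max_eq_right h0]
  have hHh : ∀ t, t ≤ κ → H t = h t := by
    intro t ht
    simp only [hHdef]
    rw [min_eq_left ht]
    rcases le_total t 0 with h0 | h0
    · rw [max_eq_left h0, hhz 0 le_rfl, hhz t h0]
    · rw [max_eq_right h0]
  have hmass : ∀ y : ℝ → ℝ, (∀ t, y t ≤ κ) → massG G y = massG g y := by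
    intro y hy
    funext r
    simp only [massG, hGg _ (hy _)]
  set c := 200 * Real.pi * B + 40000 * Real.pi ^ 2 * B ^ 2 with hcdef
  have hc : 0 < c := by positivity
  obtain ⟨y, hyc, hyeq, hyuniq⟩ := volterra κ (F := truncF G H) hc
    (fun y hy => truncF_continuous hGc hy hGB hHc)
    (fun y hy s hs => (truncF_abs_le hGc hy hGB hHB hs).trans (by
      have h1 : 0 ≤ 200 * Real.pi * B * s ^ 3 := by positivity
      have h2 : 0 ≤ 40000 * Real.pi ^ 2 * B ^ 2 * (s + s ^ 3) := by positivity
      rw [hcdef]; linarith))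
    (fun y₁ y₂ h₁ h₂ s hs D hD =>
      (truncF_sub_le hGc h₁ h₂ hGB hHB hGL hHL hs hD).trans (by
        have hD0 : 0 ≤ D := (abs_nonneg _).trans (hD 0 le_rfl hs)
        gcongr
        have h1 : 0 ≤ 200 * Real.pi * B * s ^ 3 := by positivity
        have h2 : 0 ≤ 40000 * Real.pi ^ 2 * B ^ 2 * s := by positivity
        rw [hcdef]; linarith))
  have hFc := truncF_continuous hGc hyc hGB hHc
  have hd : ∀ r, 0 < r → HasDerivAt y (truncF G H y r) r := by
    intro r hr
    have h1 := (intervalIntegral.integral_hasDerivAt_right (hFc.intervalIntegrable 0 r)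
      (hFc.stronglyMeasurableAtFilter _ _) hFc.continuousAt).const_add κ
    refine h1.congr_of_eventuallyEq ?_
    filter_upwards [Ioi_mem_nhds hr] with t ht
    rw [hyeq t, max_eq_left (le_of_lt ht)]
  have hFnp : ∀ s, 0 ≤ s → truncF G H y s ≤ 0 := by
    intro s hs
    have h1 : 0 ≤ massG G y s := massG_nonneg (fun t => hg0 _) hs
    have h2 : 0 ≤ H (y s) := hh0 _
    have h3 := (inv_pos.2 (trunc_pos (1 - 2 * massG G y s / s))).le
    unfold truncF
    rw [neg_mul, neg_nonpos]
    positivity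
  have hyle : ∀ t, y t ≤ κ := by
    intro t
    rw [hyeq t]
    have := intervalIntegral.integral_nonneg (μ := volume) (f := fun s => -truncF G H y s)
      (le_max_right t 0) (fun s hs => neg_nonneg.2 (hFnp s hs.1))
    rw [intervalIntegral.integral_neg] at this
    linarith
  have hm := hmass y hyle
  have hAc := one_sub_mass_continuous hGc hyc hGB
  rw [hm] at hAc
  have hF : ∀ r, 1 / 25 ≤ 1 - 2 * massG g y r / r → truncF G H y r = rhsEV g h y r := by
    intro r hr
    rw [truncF, rhsEV, hm, max_eq_left hr, hHh _ (hyle r)]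
  have hlt : ∀ r, 0 < r → 1 / 25 ≤ 1 - 2 * massG g y r / r → 2 * massG g y r < r := by
    intro r hr hA
    have : 2 * massG g y r / r < 1 := by linarith
    rwa [div_lt_one hr] at this
  have hA : ∀ r, 0 < r → 1 / 25 < 1 - 2 * massG g y r / r := by
    by_contra hcon
    push Not at hcon
    obtain ⟨r₀, hr₀, hbad⟩ := hcon
    obtain ⟨r, ⟨⟨hr0, hr1⟩, hrA⟩, hleast⟩ :=
      ((isCompact_Icc (a := 0) (b := r₀)).inter_right
        (isClosed_le hAc continuous_const)).exists_isLeast ⟨r₀, ⟨hr₀.le, le_rfl⟩, hbad⟩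
    simp only [mem_ofPred_eq] at hrA
    have hrpos : 0 < r := by
      rcases hr0.eq_or_lt with h0 | h0
      · rw [← h0] at hrA; norm_num at hrA
      · exact h0
    have hbefore : ∀ t, 0 < t → t < r → 1 / 25 < 1 - 2 * massG g y t / t := by
      intro t ht htr
      by_contra hcon
      exact absurd (hleast ⟨⟨ht.le, htr.le.trans hr1⟩, not_lt.1 hcon⟩) (not_le.2 htr)
    have hrge : 1 / 25 ≤ 1 - 2 * massG g y r / r := by
      have ht : Tendsto (fun t => 1 - 2 * massG g y t / t) (𝓝[<] r)
          (𝓝 (1 - 2 * massG g y r / r)) :=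
        hAc.continuousAt.tendsto.mono_left nhdsWithin_le_nhds
      refine ge_of_tendsto ht ?_
      filter_upwards [Ioo_mem_nhdsLT hrpos] with t ht
      exact (hbefore t ht.1 ht.2).le
    have hall : ∀ t, 0 < t → t ≤ r → 1 / 25 ≤ 1 - 2 * massG g y t / t := by
      intro t ht htr
      rcases htr.eq_or_lt with h0 | h0
      · rw [h0]; exact hrge
      · exact (hbefore t ht h0).le
    have := buchdahl hgc hgm hg0 hh0 hh hyc hrpos (fun t ht htr =>
      ⟨hlt t ht (hall t ht htr), by rw [← hF t (hall t ht htr)]; exact hd t ht⟩)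
    linarith
  refine ⟨y, ⟨hyc, fun r hr => ?_, fun r hr => ⟨hlt r hr (hA r hr).le, ?_⟩⟩, fun y' hy' => ?_⟩
  · rw [hyeq r, max_eq_right hr]; simp
  · rw [← hF r (hA r hr).le]; exact hd r hr
  · have hle' := hy'.le hg0 hh0
    have hm' := hmass y' hle'
    refine hyuniq y' hy'.1 (fun r => ?_)
    have hFc' := truncF_continuous hGc hy'.1 hGB hHc
    rw [intervalIntegral.integral_eq_sub_of_hasDerivAt_of_le (f := y') (le_max_right r 0)
      hy'.1.continuousOn ?_ (hFc'.intervalIntegrable _ _), hy'.2.1 0 le_rfl]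
    · rcases le_total r 0 with hr | hr
      · rw [max_eq_right hr, hy'.2.1 0 le_rfl, hy'.2.1 r hr]; ring
      · rw [max_eq_left hr]; ring
    · intro s hs
      have hA' := buchdahl hgc hgm hg0 hh0 hh hy'.1 hs.1 (fun t ht _ => hy'.2.2 t ht)
      have : truncF G H y' s = rhsEV g h y' s := by
        rw [truncF, rhsEV, hm', max_eq_left hA'.le, hHh _ (hle' s)]
      rw [this]
      exact (hy'.2.2 s hs.1).2

/-! ### Regularity, monotonicity and compact support -/

/-- The mean density `m(s)/s³ = 4π ∫₀¹ g(y(su)) u² du`, in a form that is visibly continuous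
at `s = 0`. -/
def meanDens (g y : ℝ → ℝ) (s : ℝ) : ℝ :=
  4 * Real.pi * ∫ u in (0 : ℝ)..1, g (y (s * u)) * u ^ 2

lemma meanDens_continuous {g y : ℝ → ℝ} (hg : Continuous g) (hy : Continuous y) :
    Continuous (meanDens g y) := by
  unfold meanDens
  refine continuous_const.mul ?_
  refine intervalIntegral.continuous_parametric_intervalIntegral_of_continuous' ?_ 0 1
  unfold Function.uncurry
  fun_prop

lemma massG_eq_meanDens (g y : ℝ → ℝ) (s : ℝ) : massG g y s = s ^ 3 * meanDens g y s := by
  unfold massG meanDens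
  have h := intervalIntegral.smul_integral_comp_mul_left (a := 0) (b := 1)
    (fun t => g (y t) * t ^ 2) s
  rw [mul_zero, mul_one] at h
  rw [← h, smul_eq_mul]
  simp only [mul_pow]
  have : ∀ u : ℝ, g (y (s * u)) * (s ^ 2 * u ^ 2) = s ^ 2 * (g (y (s * u)) * u ^ 2) :=
    fun u => by ring
  simp only [this, intervalIntegral.integral_const_mul]
  ring

lemma mass_div_sq_eq (g y : ℝ → ℝ) (s : ℝ) : massG g y s / s ^ 2 = s * meanDens g y s := by
  rw [massG_eq_meanDens]
  rcases eq_or_ne s 0 with rfl | hs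
  · simp
  · field_simp

lemma meanDens_zero (g y : ℝ → ℝ) : meanDens g y 0 = 4 * Real.pi / 3 * g (y 0) := by
  simp only [meanDens, zero_mul, intervalIntegral.integral_const_mul, integral_pow]
  norm_num
  ring

lemma mass_div_sq_hasDerivAt {g y : ℝ → ℝ} (hg : Continuous g) (hy : Continuous y) (s : ℝ) :
    HasDerivAt (fun s => s * meanDens g y s)
      (4 * Real.pi * g (y s) - 2 * meanDens g y s) s := by
  rcases eq_or_ne s 0 with rfl | hs
  · rw [meanDens_zero, show 4 * Real.pi * g (y 0) - 2 * (4 * Real.pi / 3 * g (y 0)) =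
      meanDens g y 0 by rw [meanDens_zero]; ring, hasDerivAt_iff_tendsto_slope]
    refine ((meanDens_continuous hg hy).tendsto 0).mono_left nhdsWithin_le_nhds |>.congr' ?_
    filter_upwards [self_mem_nhdsWithin] with t ht
    have ht : t ≠ 0 := ht
    simp [slope_def_field, ht]
  · rw [← funext (mass_div_sq_eq g y)]
    have h := (massG_hasDerivAt hg hy s).fun_div ((hasDerivAt_id s).fun_pow 2) (by simpa using hs)
    refine h.congr_deriv ?_
    simp only [id, massG_eq_meanDens g y s]
    field_simp
    push_cast
    ring

lemma mass_div_sq_contDiff {g y : ℝ → ℝ} (hg : Continuous g) (hy : Continuous y) :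
    ContDiff ℝ 1 (fun s => s * meanDens g y s) := by
  have h := mass_div_sq_hasDerivAt hg hy
  have hc := meanDens_continuous hg hy
  rw [contDiff_one_iff_deriv]
  refine ⟨fun s => (h s).differentiableAt, ?_⟩
  rw [funext fun s => (h s).deriv]
  fun_prop

lemma rhsEV_eq (g h y : ℝ → ℝ) (s : ℝ) : rhsEV g h y s =
    -(1 - 2 * (s * (s * meanDens g y s)))⁻¹ *
      (s * meanDens g y s + 4 * Real.pi * s * h (y s)) := by
  rw [rhsEV, mass_div_sq_eq, mul_div_assoc, mass_div_eq, mass_div_sq_eq]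

/-- The mass term `m/r²` is `C¹` up to the centre, so the right-hand side of the structure
equation gains one derivative over `y`. -/
lemma ExtSol.contDiffOn {g h y : ℝ → ℝ} {κ : ℝ} (hg : Continuous g) (hh : ContDiff ℝ 1 h)
    (hy : ExtSol g h κ y) : ContDiffOn ℝ 2 y (Ici 0) := by
  have hP := mass_div_sq_contDiff hg hy.1
  have hhc := hh.continuous
  have hyc := hy.1
  have hA : ∀ s ∈ Ici (0 : ℝ), 1 - 2 * (s * (s * meanDens g y s)) ≠ 0 := by
    intro s hs
    rcases (mem_Ici.1 hs).eq_or_lt with rfl | hs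
    · norm_num
    · rw [← mass_div_sq_eq, ← mass_div_eq]
      have : massG g y s / s < 1 / 2 := by
        rw [div_lt_iff₀ hs]; linarith [(hy.2.2 s hs).1]
      linarith
  have hrhs : ∀ n : WithTop ℕ∞, n ≤ 1 → ContDiffOn ℝ n y (Ici 0) →
      ContDiffOn ℝ n (rhsEV g h y) (Ici 0) := by
    intro n hn hyn
    rw [funext (rhsEV_eq g h y)]
    have hP' := (hP.of_le hn).contDiffOn (s := Ici (0 : ℝ))
    have hh' := (hh.of_le hn).comp_contDiffOn hyn
    refine ((contDiffOn_const.sub (contDiffOn_const.mul (contDiffOn_id.mul hP'))).inv hA).neg.mul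
      (hP'.add ((contDiffOn_const.mul contDiffOn_id).mul hh'))
  have hrc : ContinuousOn (rhsEV g h y) (Ici 0) :=
    (hrhs 0 zero_le_one (contDiffOn_zero.2 hyc.continuousOn)).continuousOn
  have hd : ∀ s ∈ Ici (0 : ℝ), HasDerivWithinAt y (rhsEV g h y s) (Ici 0) s := by
    intro s hs
    rcases (mem_Ici.1 hs).eq_or_lt with rfl | hs
    · refine hasDerivWithinAt_Ici_of_tendsto_deriv (s := Ioi 0)
        (fun t ht => (hy.2.2 t ht).2.differentiableAt.differentiableWithinAt)
        hyc.continuousWithinAt self_mem_nhdsWithin ?_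
      refine ((hrc 0 (mem_Ici.2 le_rfl)).mono_left (nhdsWithin_mono 0 Ioi_subset_Ici_self)).congr' ?_
      filter_upwards [self_mem_nhdsWithin] with t ht
      exact (hy.2.2 t ht).2.deriv.symm
    · exact (hy.2.2 s hs).2.hasDerivWithinAt
  have hdw : ∀ s ∈ Ici (0 : ℝ), derivWithin y (Ici 0) s = rhsEV g h y s := fun s hs =>
    (hd s hs).derivWithin (uniqueDiffOn_Ici 0 s hs)
  have hdiff : DifferentiableOn ℝ y (Ici 0) := fun s hs => (hd s hs).differentiableWithinAt
  have h1 : ContDiffOn ℝ 1 y (Ici 0) :=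
    (contDiffOn_one_iff_derivWithin (uniqueDiffOn_Ici 0)).2 ⟨hdiff, hrc.congr hdw⟩
  rw [show (2 : WithTop ℕ∞) = 1 + 1 from one_add_one_eq_two.symm,
    contDiffOn_succ_iff_derivWithin (uniqueDiffOn_Ici 0)]
  exact ⟨hdiff, by simp, (hrhs 1 le_rfl h1).congr hdw⟩

lemma ExtSol.mass_pos {g h y : ℝ → ℝ} {κ : ℝ} (hg : Continuous g) (hg0 : ∀ t, 0 ≤ g t)
    (hgpos : ∀ t, 0 < t → 0 < g t) (hκ : 0 < κ) (hy : ExtSol g h κ y) {r : ℝ} (hr : 0 < r) :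
    0 < massG g y r := by
  have hc : Continuous (fun s => g (y s) * s ^ 2) := by
    have := hy.1
    fun_prop
  have hev : ∀ᶠ t in 𝓝 (0 : ℝ), 0 < y t :=
    hy.1.continuousAt.eventually_const_lt (by rw [hy.2.1 0 le_rfl]; exact hκ)
  obtain ⟨δ, hδ, hball⟩ := Metric.eventually_nhds_iff.1 hev
  set t := min (δ / 2) r with ht
  have ht0 : 0 < t := lt_min (by positivity) hr
  have htδ : t < δ := (min_le_left _ _).trans_lt (by linarith)
  refine mul_pos (by positivity) (intervalIntegral.integral_pos hr hc.continuousOn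
    (fun s _ => mul_nonneg (hg0 _) (sq_nonneg s)) ⟨t, ⟨ht0.le, min_le_right _ _⟩, ?_⟩)
  have := hgpos _ (hball (y := t) (by rw [Real.dist_eq, sub_zero, abs_of_pos ht0]; exact htδ))
  positivity

lemma ExtSol.strictAntiOn {g h y : ℝ → ℝ} {κ : ℝ} (hg : Continuous g) (hg0 : ∀ t, 0 ≤ g t)
    (hh0 : ∀ t, 0 ≤ h t) (hgpos : ∀ t, 0 < t → 0 < g t) (hκ : 0 < κ) (hy : ExtSol g h κ y) :
    StrictAntiOn y (Ici 0) := by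
  refine strictAntiOn_of_deriv_neg (convex_Ici 0) hy.1.continuousOn fun r hr => ?_
  rw [interior_Ici] at hr
  have hr : 0 < r := hr
  have h1 := hy.2.2 r hr
  rw [h1.2.deriv]
  refine (rhsEV_nonpos hg0 hh0 hr h1.1).trans_lt ?_
  have hM := hy.mass_pos hg hg0 hgpos hκ hr
  have := hh0 (y r)
  have : 0 < massG g y r / r ^ 2 + 4 * Real.pi * r * h (y r) := by positivity
  linarith

/-- The solution drops below every positive level: a density bounded below by `γ > 0` would force
`y' ≤ -(4π/3) γ r`. -/
lemma ExtSol.exists_lt {g h y : ℝ → ℝ} {κ : ℝ} (hg : Continuous g) (hgm : Monotone g)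
    (hg0 : ∀ t, 0 ≤ g t) (hh0 : ∀ t, 0 ≤ h t) (hgpos : ∀ t, 0 < t → 0 < g t)
    (hy : ExtSol g h κ y) {ε : ℝ} (hε : 0 < ε) : ∃ r, 1 ≤ r ∧ y r < ε := by
  by_contra hcon
  push Not at hcon
  have hpi := Real.pi_pos
  have hanti := hy.antitoneOn hg0 hh0
  have hge : ∀ r, 0 ≤ r → ε ≤ y r := by
    intro r hr
    exact (hcon (max 1 r) (le_max_left _ _)).trans
      (hanti hr (hr.trans (le_max_right _ _)) (le_max_right _ _))
  set γ := g ε with hγ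
  have hγ0 : 0 < γ := hgpos ε hε
  have hz : AntitoneOn (fun r => y r + 2 * Real.pi / 3 * γ * r ^ 2) (Ici 0) := by
    refine antitoneOn_of_hasDerivWithinAt_nonpos
      (f' := fun r => rhsEV g h y r + 2 * Real.pi / 3 * γ * (2 * r)) (convex_Ici 0) ?_ ?_ ?_
    · have := hy.1
      fun_prop
    · intro r hr
      rw [interior_Ici] at hr
      have h2 := ((hasDerivAt_pow 2 r).const_mul (2 * Real.pi / 3 * γ))
      refine ((hy.2.2 r hr).2.add h2).hasDerivWithinAt.congr_deriv ?_
      simp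
    · intro r hr
      rw [interior_Ici] at hr
      have hr : 0 < r := hr
      have h1 := rhsEV_nonpos hg0 hh0 hr (hy.2.2 r hr).1
      have h2 := massG_lower hg hy.1 hr.le (γ := γ) (fun t ht _ => hgm (hge t ht))
      have h3 : 4 * Real.pi / 3 * γ * r ≤ massG g y r / r ^ 2 := by
        rw [le_div_iff₀ (by positivity)]
        linarith
      have h4 : 0 ≤ 4 * Real.pi * r * h (y r) := by
        have := hh0 (y r); positivity
      linarith
  set a := 2 * Real.pi / 3 * γ with ha
  have ha0 : 0 < a := by positivity
  set r := 1 + |κ| / a with hr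
  have hr1 : 1 ≤ r := by rw [hr]; have : 0 ≤ |κ| / a := by positivity
                         linarith
  have h1 := hz (mem_Ici.2 le_rfl) (mem_Ici.2 (by linarith : (0 : ℝ) ≤ r)) (by linarith)
  simp only [hy.2.1 0 le_rfl] at h1
  have h2 := hge r (by linarith)
  have h3 : |κ| ≤ a * r := by rw [hr, mul_add, mul_div_cancel₀ _ ha0.ne']; linarith
  have h4 : a * r ≤ a * r ^ 2 := by
    have : r ≤ r ^ 2 := by nlinarith
    gcongr
  have h5 := le_abs_self κ
  norm_num at h1
  linarith

/-- The solution reaches zero. If it stayed positive, then `y ≥ M/r` for large `r` with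
`M = m(r₀) > 0`, while `y' ≤ -c' r yⁿ` gives `y^{1-n} ≥ c'' (r² - r₀²)`. These two bounds are
incompatible when `n - 1 < 2`. -/
lemma ExtSol.exists_nonpos {g h y : ℝ → ℝ} {κ : ℝ} (hg : Continuous g) (hgm : Monotone g)
    (hg0 : ∀ t, 0 ≤ g t) (hh0 : ∀ t, 0 ≤ h t) (hgpos : ∀ t, 0 < t → 0 < g t) (hκ : 0 < κ)
    {c y₀ n : ℝ} (hc : 0 < c) (hy₀ : 0 < y₀) (hn1 : 1 < n) (hn3 : n < 3)
    (hlow : ∀ t, 0 < t → t < y₀ → c * t ^ n ≤ g t)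
    (hy : ExtSol g h κ y) : ∃ r, 0 < r ∧ y r ≤ 0 := by
  by_contra hcon
  push Not at hcon
  have hpi := Real.pi_pos
  have hanti := hy.antitoneOn hg0 hh0
  obtain ⟨r₀, hr₀, hyr₀⟩ := hy.exists_lt hg hgm hg0 hh0 hgpos hy₀
  have hr₀0 : 0 < r₀ := by linarith
  have hpos : ∀ r, r₀ ≤ r → 0 < r := fun r hr => hr₀0.trans_le hr
  have hsmall : ∀ r, r₀ ≤ r → y r < y₀ := fun r hr =>
    (hanti hr₀0.le (hpos r hr).le hr).trans_lt hyr₀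
  -- the upper bound on `y`
  set b := 4 * Real.pi / 3 * c with hb
  have hb0 : 0 < b := by positivity
  have hder : ∀ r, r₀ ≤ r → rhsEV g h y r ≤ -(b * r * y r ^ n) := by
    intro r hr
    have h0 := hpos r hr
    have h1 := rhsEV_nonpos hg0 hh0 h0 (hy.2.2 r h0).1
    have h2 := massG_lower hg hy.1 h0.le (γ := c * y r ^ n) (fun t ht htr =>
      (hlow _ (hcon r h0) (hsmall r hr)).trans (hgm (hanti ht h0.le htr)))
    have h3 : b * r * y r ^ n ≤ massG g y r / r ^ 2 := by
      rw [le_div_iff₀ (by positivity)]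
      refine le_trans (le_of_eq ?_) h2
      rw [hb]; ring
    have h4 : 0 ≤ 4 * Real.pi * r * h (y r) := by
      have := hh0 (y r); positivity
    linarith
  have hup : MonotoneOn (fun r => y r ^ (1 - n) - (n - 1) * b / 2 * r ^ 2) (Ici r₀) := by
    refine monotoneOn_of_hasDerivWithinAt_nonneg
      (f' := fun r => rhsEV g h y r * (1 - n) * y r ^ (1 - n - 1) - (n - 1) * b / 2 * (2 * r))
      (convex_Ici r₀) ?_ ?_ ?_
    · refine ContinuousOn.sub (hy.1.continuousOn.rpow_const fun r hr =>
        Or.inl (hcon r (hpos r hr)).ne') (by fun_prop)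
    · intro r hr
      rw [interior_Ici] at hr
      have h0 := hpos r (le_of_lt hr)
      have h2 := ((hasDerivAt_pow 2 r).const_mul ((n - 1) * b / 2))
      refine (((hy.2.2 r h0).2.rpow_const (p := 1 - n)
        (Or.inl (hcon r h0).ne')).sub h2).hasDerivWithinAt.congr_deriv ?_
      simp
    · intro r hr
      rw [interior_Ici] at hr
      have h0 := hpos r (le_of_lt hr)
      have h1 := hder r (le_of_lt hr)
      have h2 : 0 < y r ^ (1 - n - 1) := Real.rpow_pos_of_pos (hcon r h0) _
      have h3 : y r ^ n * y r ^ (1 - n - 1) = 1 := by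
        rw [← Real.rpow_add (hcon r h0)]; simp
      have h4 : b * r * y r ^ n * ((n - 1) * y r ^ (1 - n - 1)) ≤
          -rhsEV g h y r * ((n - 1) * y r ^ (1 - n - 1)) := by
        have : 0 < n - 1 := by linarith
        gcongr
        linarith
      have h5 : b * r * y r ^ n * ((n - 1) * y r ^ (1 - n - 1)) = b * r * (n - 1) := by
        linear_combination b * r * (n - 1) * h3
      nlinarith
  -- the lower bound on `y`
  set M := massG g y r₀ with hM
  have hM0 : 0 < M := hy.mass_pos hg hg0 hgpos hκ hr₀0
  have hlowmon : AntitoneOn (fun r => y r - M * r⁻¹) (Ici r₀) := by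
    refine antitoneOn_of_hasDerivWithinAt_nonpos
      (f' := fun r => rhsEV g h y r - M * -(r ^ 2)⁻¹) (convex_Ici r₀) ?_ ?_ ?_
    · exact hy.1.continuousOn.sub (continuousOn_const.mul
        (continuousOn_id.inv₀ fun r hr => (hpos r hr).ne'))
    · intro r hr
      rw [interior_Ici] at hr
      have h0 := hpos r (le_of_lt hr)
      exact ((hy.2.2 r h0).2.sub ((hasDerivAt_inv h0.ne').const_mul M)).hasDerivWithinAt
    · intro r hr
      rw [interior_Ici] at hr
      have h0 := hpos r (le_of_lt hr)
      have h1 := rhsEV_nonpos hg0 hh0 h0 (hy.2.2 r h0).1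
      have h2 : M / r ^ 2 ≤ massG g y r / r ^ 2 := by
        gcongr
        exact massG_monotoneOn hg hy.1 hg0 (le_of_lt hr)
      have h4 : 0 ≤ 4 * Real.pi * r * h (y r) := by
        have := hh0 (y r); positivity
      rw [div_eq_mul_inv] at h2
      linarith
  have hge : ∀ r, r₀ ≤ r → M * r⁻¹ ≤ y r := by
    intro r hr
    have ht : Tendsto (fun s : ℝ => -(M * s⁻¹)) atTop (𝓝 0) := by
      simpa using (tendsto_inv_atTop_zero.const_mul M).neg
    have : (0 : ℝ) ≤ y r - M * r⁻¹ := by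
      refine le_of_tendsto ht ?_
      filter_upwards [eventually_ge_atTop r] with s hs
      have h1 := hlowmon (mem_Ici.2 hr) (mem_Ici.2 (hr.trans hs)) hs
      have h2 := hcon s (hpos s (hr.trans hs))
      simp only at h1
      linarith
    linarith
  -- comparison of the growth rates `r²` and `r^{n-1}`
  set a := (n - 1) * b / 2 with ha
  have ha0 : 0 < a := by
    have : 0 < n - 1 := by linarith
    positivity
  have hmain : ∀ r, r₀ ≤ r → a ≤ M ^ (1 - n) * r ^ (-(3 - n)) + a * r₀ ^ 2 * r ^ (-(2 : ℝ)) := by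
    intro r hr
    have h0 := hpos r hr
    have h1 := hup (mem_Ici.2 le_rfl) (mem_Ici.2 hr) hr
    simp only at h1
    have h2 : 0 < y r₀ ^ (1 - n) := Real.rpow_pos_of_pos (hcon _ hr₀0) _
    have h3 : y r ^ (1 - n) ≤ (M * r⁻¹) ^ (1 - n) :=
      Real.rpow_le_rpow_of_nonpos (by positivity) (hge r hr) (by linarith)
    have h4 : (M * r⁻¹) ^ (1 - n) = M ^ (1 - n) * r ^ (-(3 - n)) * r ^ 2 := by
      rw [Real.mul_rpow hM0.le (by positivity), Real.inv_rpow h0.le, ← Real.rpow_neg h0.le,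
        mul_assoc, ← Real.rpow_natCast r 2, ← Real.rpow_add h0]
      congr 2
      push_cast
      ring
    have h5 : r ^ (-(2 : ℝ)) * r ^ 2 = 1 := by
      rw [← Real.rpow_natCast r 2, ← Real.rpow_add h0]; simp
    have h6 : 0 < r ^ 2 := by positivity
    refine le_of_mul_le_mul_right ?_ h6
    have h7 : (M ^ (1 - n) * r ^ (-(3 - n)) + a * r₀ ^ 2 * r ^ (-(2 : ℝ))) * r ^ 2 =
        M ^ (1 - n) * r ^ (-(3 - n)) * r ^ 2 + a * r₀ ^ 2 := by
      linear_combination a * r₀ ^ 2 * h5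
    rw [h7, ← h4]
    linarith
  have hlim : Tendsto (fun r : ℝ => M ^ (1 - n) * r ^ (-(3 - n)) + a * r₀ ^ 2 * r ^ (-(2 : ℝ)))
      atTop (𝓝 0) := by
    have h1 := (tendsto_rpow_neg_atTop (y := 3 - n) (by linarith)).const_mul (M ^ (1 - n))
    have h2 := (tendsto_rpow_neg_atTop (y := 2) (by norm_num)).const_mul (a * r₀ ^ 2)
    simpa using h1.add h2
  have : a ≤ 0 := by
    refine ge_of_tendsto hlim ?_
    filter_upwards [eventually_ge_atTop r₀] with r hr
    exact hmain r hr
  linarith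

/-! ### Steady states as extended solutions -/

lemma gEV_pos {φ : ℝ → ℝ} (hφc : Continuous φ) (hφ0 : ∀ η : ℝ, η ≤ 0 → φ η = 0)
    (hφ : ∀ η, 0 ≤ φ η) {C η₀ k : ℝ} (hC : 0 < C) (hη₀ : 0 < η₀) (hk : 0 < k)
    (hgrowth : ∀ η : ℝ, 0 < η → η < η₀ → C * η ^ k ≤ φ η) {y : ℝ} (hy : 0 < y) :
    0 < gEV φ y := by
  obtain ⟨c, y₀, hc, hy₀, hlow⟩ := gEV_lower hφc hφ hC hη₀ hk hgrowth
  set t := min y (y₀ / 2) with ht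
  have ht0 : 0 < t := lt_min hy (by positivity)
  have hty : t < y₀ := (min_le_right _ _).trans_lt (by linarith)
  have h1 : 0 < c * t ^ (k + 3 / 2) := by positivity
  exact h1.trans_le ((hlow t ht0 hty).trans (gEV_monotone hφc hφ0 hφ (min_le_left _ _)))

/-- Freezing a steady state at its central value for `r < 0` gives an extended solution. -/
lemma IsEVSteady.extSol {φ : ℝ → ℝ} {κ : ℝ} {y : ℝ → ℝ} (hy : IsEVSteady φ κ y) :
    ExtSol (gEV φ) (hEV φ) κ (fun r => y (max r 0)) := by
  obtain ⟨hC2, h0, hsol⟩ := hy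
  refine ⟨?_, fun r hr => by simp only [max_eq_right hr, h0], fun r hr => ?_⟩
  · exact hC2.continuousOn.comp_continuous (by fun_prop) fun r => mem_Ici.2 (le_max_right _ _)
  · have hm : massG (gEV φ) (fun r => y (max r 0)) r = mEV φ y r := by
      unfold massG mEV
      congr 1
      refine intervalIntegral.integral_congr fun s hs => ?_
      rw [uIcc_of_le hr.le] at hs
      simp only [max_eq_left hs.1]
    have hd : HasDerivAt y (deriv y r) r :=
      ((hC2.differentiableOn two_ne_zero).differentiableAt (Ici_mem_nhds hr)).hasDerivAt
    rw [hm]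
    refine ⟨(hsol r hr).1, ?_⟩
    have he : rhsEV (gEV φ) (hEV φ) (fun r => y (max r 0)) r = deriv y r := by
      rw [(hsol r hr).2, rhsEV, hm, max_eq_left hr.le]
    rw [he]
    refine hd.congr_of_eventuallyEq ?_
    filter_upwards [Ioi_mem_nhds hr] with t ht
    rw [max_eq_left (le_of_lt ht)]

/-! ### The one-parameter family of steady states -/

/-- **Existence and uniqueness of compactly supported steady states of the
spherically symmetric, asymptotically flat Einstein–Vlasov system, parameterized
by the central redshift `κ`.** -/
theorem stmt_11 (φ : ℝ → ℝ) (hφcont : Continuous φ)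
    (hφC2 : ContDiffOn ℝ 2 φ (Ioi 0))
    (hφ0 : ∀ η : ℝ, η ≤ 0 → φ η = 0) (hφpos : ∀ η : ℝ, 0 < η → 0 < φ η)
    (C η₀ k : ℝ) (hC : 0 < C) (hη₀ : 0 < η₀) (hk : 0 < k) (hk' : k < 3 / 2)
    (hgrowth : ∀ η : ℝ, 0 < η → η < η₀ → C * η ^ k ≤ φ η)
    (κ : ℝ) (hκ : 0 < κ) :
    ∃ y : ℝ → ℝ, IsEVSteady φ κ y ∧
      StrictAntiOn y (Ici 0) ∧
      (∃ R : ℝ, 0 < R ∧ y R = 0 ∧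
        (∀ R' : ℝ, 0 < R' → y R' = 0 → R' = R) ∧
        (∀ r : ℝ, R < r → gEV φ (y r) = 0 ∧ hEV φ (y r) = 0) ∧
        Tendsto (mEV φ y) atTop (nhds (mEV φ y R))) ∧
      ContDiffOn ℝ 1 (fun r => gEV φ (y r)) (Ici 0) ∧
      ContDiffOn ℝ 1 (fun r => hEV φ (y r)) (Ici 0) ∧
      ∀ y' : ℝ → ℝ, IsEVSteady φ κ y' → EqOn y y' (Ici 0) := by
  have hφ := phi_nonneg hφ0 hφpos
  have hg1 := gEV_contDiff hφcont hφ0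
  have hh1 := hEV_contDiff hφcont hφ0
  have hgc := hg1.continuous
  have hgm := gEV_monotone hφcont hφ0 hφ
  have hg0 := gEV_nonneg hφcont hφ0 hφ
  have hh0 := hEV_nonneg hφcont hφ0 hφ
  have hgz : ∀ t, t ≤ 0 → gEV φ t = 0 := fun t ht => if_neg (not_lt.2 ht)
  have hhz : ∀ t, t ≤ 0 → hEV φ t = 0 := fun t ht => if_neg (not_lt.2 ht)
  have hgpos : ∀ t, 0 < t → 0 < gEV φ t := fun t ht =>
    gEV_pos hφcont hφ0 hφ hC hη₀ hk hgrowth ht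
  obtain ⟨y, hy, huniq⟩ := exists_unique_extSol hg1 hh1 hgm hg0 hh0 hgz hhz
    (hEV_hasDerivAt hφcont hφ0) hκ
  have hC2 := hy.contDiffOn hgc hh1
  have hC1 : ContDiffOn ℝ 1 y (Ici 0) := hC2.of_le one_le_two
  have hstrict := hy.strictAntiOn hgc hg0 hh0 hgpos hκ
  have hy00 : y 0 = κ := hy.2.1 0 le_rfl
  refine ⟨y, ⟨hC2, hy00, fun r hr => ⟨(hy.2.2 r hr).1, (hy.2.2 r hr).2.deriv⟩⟩, hstrict, ?_,
    hg1.comp_contDiffOn hC1, hh1.comp_contDiffOn hC1, fun y' hy' r hr => ?_⟩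
  · obtain ⟨c, y₀, hc, hy₀, hlow⟩ := gEV_lower hφcont hφ hC hη₀ hk hgrowth
    obtain ⟨r₁, hr₁, hyr₁⟩ := hy.exists_nonpos hgc hgm hg0 hh0 hgpos hκ hc hy₀
      (by linarith : 1 < k + 3 / 2) (by linarith) hlow
    obtain ⟨R, hR, hyR⟩ := intermediate_value_Icc' hr₁.le hy.1.continuousOn
      (show (0 : ℝ) ∈ Icc (y r₁) (y 0) from ⟨hyr₁, by rw [hy00]; exact hκ.le⟩)
    have hR0 : 0 < R := by
      rcases hR.1.eq_or_lt with h | h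
      · rw [← h, hy00] at hyR; exact absurd hyR hκ.ne'
      · exact h
    have hneg : ∀ r, R ≤ r → y r ≤ 0 := fun r hr => by
      rw [← hyR]
      exact hstrict.antitoneOn (mem_Ici.2 hR0.le) (mem_Ici.2 (hR0.le.trans hr)) hr
    refine ⟨R, hR0, hyR, fun R' hR' hyR' => hstrict.injOn (mem_Ici.2 hR'.le) (mem_Ici.2 hR0.le)
      (hyR'.trans hyR.symm), fun r hr => ⟨hgz _ (hneg r hr.le), hhz _ (hneg r hr.le)⟩, ?_⟩
    refine tendsto_const_nhds.congr' ?_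
    filter_upwards [eventually_ge_atTop R] with r hr
    have hcont : Continuous (fun s => gEV φ (y s) * s ^ 2) := by
      have := hy.1
      fun_prop
    have htail : ∫ s in R..r, gEV φ (y s) * s ^ 2 = 0 := by
      rw [intervalIntegral.integral_congr (g := fun _ => (0 : ℝ)) fun s hs => ?_]
      · simp
      · rw [uIcc_of_le hr] at hs
        simp only [hgz _ (hneg s hs.1), zero_mul]
    unfold mEV
    rw [← intervalIntegral.integral_add_adjacent_intervals (hcont.intervalIntegrable 0 R)
      (hcont.intervalIntegrable R r), htail, add_zero]
  · have h := congrFun (huniq _ hy'.extSol) r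
    simp only [max_eq_left (mem_Ici.1 hr)] at h
    exact h.symm
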